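/- Let Φ = {φ_a}_{a∈A} be a self-conformal IFS on ℝ^d with attractor X, let {A_b}_{b∈A} be a family of subsets of A, and suppose there is c₁ > 0 such that for every b ∈ A and all distinct a, a′ ∈ A_b, dist(φ_a(X), φ_{a′}(X)) ≥ c₁. Then there exists c ∈ (0,1] with the following property: for every sequence (b_n)_{n≥1} ∈ A^ℕ and all finite words a = (a_1,…,a_m) and a′ = (a′_1,…,a′_{m′}) with a_j ∈ A_{b_j} for 1 ≤ j ≤ m and a′_j ∈ A_{b_j} for 1 ≤ j ≤ m′, such that neither word is a prefix of the other, one has c·diam(φ_{a∧a′}(X)) ≤ dist(φ_a(X), φ_{a′}(X)) ≤ diam(φ_{a∧a′}(X)), where a∧a′ is the maximal common prefix of a and a′ and, if a∧a′ is the empty word, φ_{a∧a′} is interpreted as the identity map. -/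

import Mathlib

noncomputable section
open MeasureTheory Metric Filter Topology

variable {E : Type*} [NormedAddCommGroup E] [NormedSpace ℝ E]

/-- `f` is a contraction with ratio `r ∈ (0,1)`. -/
def IsContractionWith (r : ℝ) (f : E → E) : Prop :=
  0 < r ∧ r < 1 ∧ ∀ x y, ‖f x - f y‖ ≤ r * ‖x - y‖

/-- `f` is a contracting similarity with ratio `r ∈ (0,1)`. -/
def IsSimilarityWith (r : ℝ) (f : E → E) : Prop :=
  0 < r ∧ r < 1 ∧ ∀ x y, ‖f x - f y‖ = r * ‖x - y‖

/-- A self-conformal IFS. -/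
def IsSelfConformalIFS {A : Type*} [Fintype A] (φ : A → E → E) : Prop :=
  2 ≤ Fintype.card A ∧
  (∀ a, ∃ r, IsContractionWith r (φ a)) ∧
  (∀ a, ContDiff ℝ 1 (φ a)) ∧
  (∀ a x, 0 < ‖fderiv ℝ (φ a) x‖ ∧ ∀ v, ‖fderiv ℝ (φ a) x v‖ = ‖fderiv ℝ (φ a) x‖ * ‖v‖) ∧
  (∃ H α₀ : ℝ, 0 < H ∧ 0 < α₀ ∧ ∀ a x y,
    |‖fderiv ℝ (φ a) x‖ - ‖fderiv ℝ (φ a) y‖| ≤ H * ‖x - y‖ ^ α₀) ∧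
  (∃ a₁ a₂ x₁ x₂, φ a₁ x₁ = x₁ ∧ φ a₂ x₂ = x₂ ∧ x₁ ≠ x₂)

/-- A self-similar IFS. -/
def IsSelfSimilarIFS {A : Type*} [Fintype A] (φ : A → E → E) : Prop :=
  2 ≤ Fintype.card A ∧
  (∀ a, ∃ r, IsSimilarityWith r (φ a)) ∧
  (∃ a₁ a₂ x₁ x₂, φ a₁ x₁ = x₁ ∧ φ a₂ x₂ = x₂ ∧ x₁ ≠ x₂)

/-- The IFS is affinely irreducible: no (nonempty) proper affine subspace is preserved. -/
def AffinelyIrreducible {A : Type*} (φ : A → E → E) : Prop :=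
  ¬ ∃ W : AffineSubspace ℝ E, (W : Set E).Nonempty ∧ W ≠ ⊤ ∧
      ∀ a, φ a '' (W : Set E) ⊆ (W : Set E)

/-- Closed `ε`-neighbourhood of an affine subspace. -/
def affNbhd (W : AffineSubspace ℝ E) (ε : ℝ) : Set E :=
  {y | Metric.infDist y (W : Set E) ≤ ε}

/-- topological support of a measure -/
def msupport [MeasurableSpace E] (μ : Measure E) : Set E :=
  {x | ∀ r : ℝ, 0 < r → 0 < μ (Metric.ball x r)}

/-- distance between two sets -/
def setDist (S T : Set E) : ℝ := sInf (Set.image2 dist S T)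

/-- map corresponding to a finite word (as a list) -/
def listMap {A : Type*} (φ : A → E → E) : List A → E → E
  | [] => id
  | a :: l => φ a ∘ listMap φ l

/-- map corresponding to the first `n` letters of an infinite word -/
def wordMap {A : Type*} (φ : A → E → E) : ℕ → (ℕ → A) → E → E
  | 0, _ => id
  | n + 1, a => φ (a 0) ∘ wordMap φ n (fun k => a (k + 1))

/-- set of `Ψ`-well-approximable vectors in `ℝ^d` -/
def WApprox (d : ℕ) (Ψ : ℕ → ℝ) : Set (EuclideanSpace ℝ (Fin d)) :=
  {x | {pq : (Fin d → ℤ) × ℕ | 0 < pq.2 ∧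
        ∀ i, |x i - (pq.1 i : ℝ) / (pq.2 : ℝ)| ≤ Ψ pq.2}.Infinite}

/-- set of singular vectors in `ℝ^d` -/
def Sing (d : ℕ) : Set (EuclideanSpace ℝ (Fin d)) :=
  {x | ∀ c : ℝ, 0 < c → ∃ T : ℝ, 0 < T ∧ ∀ t : ℝ, T ≤ t →
    ∃ q : ℕ, 0 < q ∧ (q : ℝ) < t ∧
      ∀ i, |(q : ℝ) * x i - round ((q : ℝ) * x i)| ≤ c * t ^ (-(1 : ℝ) / (d : ℝ))}

section

/-- Euclidean space of dimension `d`. -/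
abbrev Eu (d : ℕ) := EuclideanSpace ℝ (Fin d)

/-- Standard basis vector. -/
def bv {d : ℕ} (i : Fin d) : Eu d := EuclideanSpace.single i (1 : ℝ)

lemma bv_apply {d : ℕ} (i j : Fin d) : (bv i : Eu d) j = if j = i then (1 : ℝ) else 0 := by
  simp [bv]

lemma bv_norm {d : ℕ} (i : Fin d) : ‖(bv i : Eu d)‖ = 1 := by
  simp [bv]

lemma inner_bv_right {d : ℕ} (x : Eu d) (i : Fin d) : inner ℝ x (bv i) = x i := by
  simp [bv, EuclideanSpace.inner_single_right]

lemma inner_bv_left {d : ℕ} (x : Eu d) (i : Fin d) : inner ℝ (bv i) x = x i := by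
  rw [real_inner_comm, inner_bv_right]

lemma inner_bv_bv {d : ℕ} (i j : Fin d) :
    inner ℝ (bv i : Eu d) (bv j) = if i = j then (1 : ℝ) else 0 := by
  rw [inner_bv_right]; simp [bv, eq_comm]

lemma abs_coord_le {d : ℕ} (x : Eu d) (i : Fin d) : |x i| ≤ ‖x‖ := by
  rw [← inner_bv_right]
  calc _ ≤ ‖x‖ * ‖(bv i : Eu d)‖ := abs_real_inner_le_norm _ _
    _ = _ := by rw [bv_norm, mul_one]

/-- Frobenius square norm. -/
def frob {d : ℕ} (N : Eu d →L[ℝ] Eu d) : ℝ := ∑ j, ‖N (bv j)‖ ^ 2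

lemma frob_nonneg {d : ℕ} (N : Eu d →L[ℝ] Eu d) : 0 ≤ frob N :=
  Finset.sum_nonneg fun _ _ => sq_nonneg _

lemma col_sq_le_frob {d : ℕ} (N : Eu d →L[ℝ] Eu d) (j : Fin d) : ‖N (bv j)‖ ^ 2 ≤ frob N :=
  Finset.single_le_sum (f := fun j => ‖N (bv j)‖ ^ 2) (fun _ _ => sq_nonneg _) (Finset.mem_univ j)

lemma vec_eq_sum {d : ℕ} (u : Eu d) : u = ∑ j, u j • bv j := by
  ext i
  simp [bv, Pi.single_apply]

lemma norm_sq_apply_le_frob {d : ℕ} (N : Eu d →L[ℝ] Eu d) (u : Eu d) :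
    ‖N u‖ ^ 2 ≤ frob N * ‖u‖ ^ 2 := by
  have h1 : ‖N u‖ ≤ ∑ j, |u j| * ‖N (bv j)‖ := by
    conv_lhs => rw [vec_eq_sum u]
    rw [map_sum]
    refine (norm_sum_le _ _).trans (le_of_eq ?_)
    refine Finset.sum_congr rfl fun j _ => ?_
    rw [map_smul, norm_smul, Real.norm_eq_abs]
  have h2 := Finset.sum_mul_sq_le_sq_mul_sq Finset.univ (fun j => |u j|) (fun j => ‖N (bv j)‖)
  have h3 : ‖u‖ ^ 2 = ∑ j, |u j| ^ 2 := by
    rw [EuclideanSpace.norm_sq_eq]; simp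
  calc ‖N u‖ ^ 2 ≤ (∑ j, |u j| * ‖N (bv j)‖) ^ 2 := by gcongr
    _ ≤ _ := h2
    _ = _ := by rw [h3, frob]; ring

/-- The sum of all principal `2 × 2` minors (each counted twice). -/
def minors {d : ℕ} (N : Eu d →L[ℝ] Eu d) : ℝ :=
  ∑ i, ∑ j, if i = j then 0 else (N (bv i) i * N (bv j) j - N (bv j) i * N (bv i) j)

lemma frob_le_minors {d : ℕ} (hd : 2 ≤ d) (N : Eu d →L[ℝ] Eu d)
    (hN : ‖N‖ ≤ 1 / (4 * (d : ℝ) ^ 2))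
    (hc : ∀ u w : Eu d, inner ℝ u w = 0 → inner ℝ (u + N u) (w + N w) = 0) :
    frob N / 2 ≤ minors N := by
  set s := frob N with hs
  set ε : ℝ := 1 / (4 * (d : ℝ) ^ 2) with hε
  have hd0 : (0 : ℝ) < d := by positivity
  have hent : ∀ i j, |N (bv j) i| ≤ ε := fun i j =>
    (abs_coord_le _ _).trans ((N.le_opNorm _).trans (by rw [bv_norm, mul_one]; exact hN))
  have hs0 : 0 ≤ s := frob_nonneg N
  have hdot : ∀ i j, |inner ℝ (N (bv i)) (N (bv j))| ≤ s := fun i j => by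
    have h1 := abs_real_inner_le_norm (N (bv i)) (N (bv j))
    have h2 := col_sq_le_frob N i
    have h3 := col_sq_le_frob N j
    nlinarith [sq_nonneg (‖N (bv i)‖ - ‖N (bv j)‖)]
  have hoff : ∀ i j, i ≠ j → N (bv j) i + N (bv i) j + inner ℝ (N (bv i)) (N (bv j)) = 0 := by
    intro i j hij
    have h := hc (bv i) (bv j) (by rw [inner_bv_bv, if_neg hij])
    rw [inner_add_left, inner_add_right, inner_add_right, inner_bv_bv, if_neg hij,
      inner_bv_right, real_inner_comm, inner_bv_right] at h
    linarith
  have hdiag : ∀ i j, i ≠ j → |N (bv i) i - N (bv j) j| ≤ s := by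
    intro i j hij
    have h := hc (bv i + bv j) (bv i - bv j) (by
      simp only [inner_add_left, inner_sub_right, inner_bv_bv, hij, hij.symm, if_true, if_false]
      norm_num)
    simp only [map_add, map_sub, inner_add_left, inner_add_right, inner_sub_right, bv_apply,
      inner_bv_right, inner_bv_left, hij, hij.symm, if_true, if_false] at h
    rw [real_inner_comm (N (bv j)) (N (bv i))] at h
    have h1 := abs_le.1 (hdot i i)
    have h2 := abs_le.1 (hdot j j)
    have h3 : 0 ≤ inner ℝ (N (bv i)) (N (bv i)) := real_inner_self_nonneg
    have h4 : 0 ≤ inner ℝ (N (bv j)) (N (bv j)) := real_inner_self_nonneg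
    rw [abs_le]
    constructor <;> linarith
  have hterm : ∀ i j, i ≠ j → (N (bv i) i) ^ 2 + (N (bv j) i) ^ 2 - 2 * ε * s ≤
      N (bv i) i * N (bv j) j - N (bv j) i * N (bv i) j := by
    intro i j hij
    have e1 : N (bv i) j = - N (bv j) i - inner ℝ (N (bv i)) (N (bv j)) := by
      linarith [hoff i j hij]
    have b1 : |N (bv i) i * (N (bv i) i - N (bv j) j)| ≤ ε * s := by
      rw [abs_mul]; exact mul_le_mul (hent _ _) (hdiag i j hij) (abs_nonneg _) (by positivity)
    have b2 : |N (bv j) i * inner ℝ (N (bv i)) (N (bv j))| ≤ ε * s := by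
      rw [abs_mul]; exact mul_le_mul (hent _ _) (hdot i j) (abs_nonneg _) (by positivity)
    have b1' := abs_le.1 b1
    have b2' := abs_le.1 b2
    rw [e1]
    nlinarith
  have hsum : s = ∑ i, ∑ j, (N (bv j) i) ^ 2 := by
    rw [hs, frob, Finset.sum_comm]
    refine Finset.sum_congr rfl fun j _ => ?_
    rw [EuclideanSpace.norm_sq_eq]; simp
  have hrow : ∀ i, (∑ j, (N (bv j) i) ^ 2) - d * (2 * ε * s) ≤
      ∑ j, if i = j then 0 else (N (bv i) i * N (bv j) j - N (bv j) i * N (bv i) j) := by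
    intro i
    obtain ⟨k, hk⟩ : ∃ k : Fin d, k ≠ i := by
      have : Nontrivial (Fin d) := Fin.nontrivial_iff_two_le.2 hd
      exact exists_ne i
    have hk2 : (∑ j, (N (bv j) i) ^ 2) ≤
        ∑ j, ((if i = j then 0 else (N (bv j) i) ^ 2) + if k = j then (N (bv i) i) ^ 2 else 0) := by
      rw [Finset.sum_add_distrib, Finset.sum_ite_eq Finset.univ k]
      simp only [Finset.mem_univ, if_true]
      rw [← Finset.add_sum_erase Finset.univ (fun j => (N (bv j) i) ^ 2) (Finset.mem_univ i),
        ← Finset.add_sum_erase Finset.univ (fun j => if i = j then (0 : ℝ) else (N (bv j) i) ^ 2)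
          (Finset.mem_univ i)]
      simp only [if_true]
      have : ∑ x ∈ Finset.univ.erase i, (N (bv x) i) ^ 2 =
          ∑ x ∈ Finset.univ.erase i, if i = x then (0 : ℝ) else (N (bv x) i) ^ 2 := by
        refine Finset.sum_congr rfl fun x hx => ?_
        rw [if_neg (Finset.ne_of_mem_erase hx).symm]
      rw [this]; linarith
    have hconst : (d : ℝ) * (2 * ε * s) = ∑ _j : Fin d, 2 * ε * s := by simp
    rw [hconst]
    refine (sub_le_sub_right hk2 _).trans ?_
    rw [← Finset.sum_sub_distrib]
    refine Finset.sum_le_sum fun j _ => ?_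
    have hes : 0 ≤ 2 * ε * s := by positivity
    by_cases hij : i = j
    · subst hij
      simp only [if_true, hk, if_false]; linarith
    · simp only [hij, if_false]
      have := hterm i j hij
      by_cases hkj : k = j
      · simp only [hkj, if_true]; linarith
      · simp only [hkj, if_false]; nlinarith [sq_nonneg (N (bv i) i)]
  have htot : s - d * (d * (2 * ε * s)) ≤ minors N := by
    rw [minors]
    have hconst : (d : ℝ) * (d * (2 * ε * s)) = ∑ _j : Fin d, d * (2 * ε * s) := by simp
    rw [hconst]; nth_rewrite 1 [hsum]
    rw [← Finset.sum_sub_distrib]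
    exact Finset.sum_le_sum fun i _ => hrow i
  have : (d : ℝ) * (d * (2 * ε * s)) = s / 2 := by
    rw [hε]; field_simp; ring
  linarith

end

section

open scoped Convolution

lemma conv_deriv_left {d : ℕ} {F : Type*} [NormedAddCommGroup F] [NormedSpace ℝ F]
    [CompleteSpace F] {k : Eu d → ℝ} {q : Eu d → F} (hk : ContDiff ℝ 1 k)
    (hkc : HasCompactSupport k) (hq : Continuous q) (x a : Eu d) :
    fderiv ℝ (k ⋆[ContinuousLinearMap.lsmul ℝ ℝ, volume] q) x a =
      ((fun y => fderiv ℝ k y a) ⋆[ContinuousLinearMap.lsmul ℝ ℝ, volume] q) x := by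
  have h := hkc.hasFDerivAt_convolution_left (μ := volume) (ContinuousLinearMap.lsmul ℝ ℝ) hk
    hq.locallyIntegrable x
  rw [h.fderiv]
  have hex : ConvolutionExistsAt (fderiv ℝ k) q x
      (ContinuousLinearMap.precompL (Eu d) (ContinuousLinearMap.lsmul ℝ ℝ)) volume :=
    (HasCompactSupport.convolutionExists_left _ (hkc.fderiv ℝ)
      (hk.continuous_fderiv (by norm_num)) hq.locallyIntegrable) x
  rw [convolution, convolution, ContinuousLinearMap.integral_apply hex]
  rfl

lemma conv_deriv_right {d : ℕ} {F : Type*} [NormedAddCommGroup F] [NormedSpace ℝ F]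
    [CompleteSpace F] {k : Eu d → ℝ} {q : Eu d → F} (hk : Continuous k)
    (hq : ContDiff ℝ 1 q) (hqc : HasCompactSupport q) (x a : Eu d) :
    fderiv ℝ (k ⋆[ContinuousLinearMap.lsmul ℝ ℝ, volume] q) x a =
      (k ⋆[ContinuousLinearMap.lsmul ℝ ℝ, volume] (fun y => fderiv ℝ q y a)) x := by
  have h := hqc.hasFDerivAt_convolution_right (μ := volume) (ContinuousLinearMap.lsmul ℝ ℝ)
    hk.locallyIntegrable hq x
  rw [h.fderiv]
  exact convolution_precompR_apply _ hk.locallyIntegrable (hqc.fderiv ℝ)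
    (hq.continuous_fderiv (by norm_num)) x a

lemma conv_swap {d : ℕ} {P q : Eu d → ℝ} (hP : ContDiff ℝ 1 P) (hPc : HasCompactSupport P)
    (hq : ContDiff ℝ 1 q) (hqc : HasCompactSupport q) (x a b : Eu d) :
    ((fun y => fderiv ℝ P y a) ⋆[ContinuousLinearMap.lsmul ℝ ℝ, volume]
      (fun y => fderiv ℝ q y b)) x =
    ((fun y => fderiv ℝ P y b) ⋆[ContinuousLinearMap.lsmul ℝ ℝ, volume]
      (fun y => fderiv ℝ q y a)) x := by
  have cP : Continuous fun y => fderiv ℝ P y a :=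
    (hP.continuous_fderiv (by norm_num)).clm_apply continuous_const
  have cq : Continuous fun y => fderiv ℝ q y a :=
    (hq.continuous_fderiv (by norm_num)).clm_apply continuous_const
  rw [← conv_deriv_right cP hq hqc, ← conv_deriv_left hP hPc cq]
  congr 2
  ext z
  rw [← conv_deriv_left hP hPc hq.continuous, conv_deriv_right hP.continuous hq hqc]

lemma null_lagrangian {d : ℕ} {P q : Eu d → ℝ} (hP : ContDiff ℝ 1 P) (hPc : HasCompactSupport P)
    (hq : ContDiff ℝ 1 q) (hqc : HasCompactSupport q) (a b : Eu d) :
    ∫ x, fderiv ℝ P x a * fderiv ℝ q x b = ∫ x, fderiv ℝ P x b * fderiv ℝ q x a := by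
  have h := conv_swap (P := fun x => P (-x)) (hP.comp contDiff_neg)
    (hPc.comp_homeomorph (Homeomorph.neg _)) hq hqc 0 a b
  have hd : ∀ y v, fderiv ℝ (fun x => P (-x)) y v = - fderiv ℝ P (-y) v := by
    intro y v
    have := ((hP.differentiable (by norm_num)) (-y)).hasFDerivAt.comp y (hasFDerivAt_id y).neg
    rw [show (fun x => P (-x)) = P ∘ Neg.neg from rfl, HasFDerivAt.fderiv (f := P ∘ Neg.neg) this]
    simp
  simp only [convolution, hd, zero_sub, ContinuousLinearMap.lsmul_apply, smul_eq_mul, neg_mul,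
    integral_neg, neg_inj] at h
  have e1 := integral_neg_eq_self (fun x => fderiv ℝ P x a * fderiv ℝ q x b) (volume : Measure (Eu d))
  have e2 := integral_neg_eq_self (fun x => fderiv ℝ P x b * fderiv ℝ q x a) (volume : Measure (Eu d))
  rw [← e1, ← e2, h]

lemma fderiv_coord {d : ℕ} {V : Eu d → Eu d} (hV : ContDiff ℝ 1 V) (x a : Eu d) (i : Fin d) :
    fderiv ℝ (fun y => V y i) x a = fderiv ℝ V x a i := by
  have h := ((hV.differentiable (by norm_num)) x).hasFDerivAt
  have h2 := (EuclideanSpace.proj (𝕜 := ℝ) i).hasFDerivAt.comp x h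
  have : (fun y => V y i) = (EuclideanSpace.proj (𝕜 := ℝ) i) ∘ V := rfl
  rw [this, h2.fderiv]
  rfl

lemma contDiff_coord {d : ℕ} {V : Eu d → Eu d} (hV : ContDiff ℝ 1 V) (i : Fin d) :
    ContDiff ℝ 1 (fun y => V y i) :=
  (EuclideanSpace.proj (𝕜 := ℝ) i).contDiff.comp hV

lemma compact_coord {d : ℕ} {V : Eu d → Eu d} (hV : HasCompactSupport V) (i : Fin d) :
    HasCompactSupport (fun y => V y i) :=
  hV.comp_left (g := fun v : Eu d => v i) rfl

lemma continuous_frob {d : ℕ} {V : Eu d → Eu d} (hV : ContDiff ℝ 1 V) :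
    Continuous fun x => frob (fderiv ℝ V x) := by
  unfold frob
  refine continuous_finsetSum _ fun j _ => ?_
  exact (((hV.continuous_fderiv (by norm_num)).clm_apply continuous_const).norm).pow 2

lemma caccioppoli {d : ℕ} (hd : 2 ≤ d) {V : Eu d → Eu d} (hV : ContDiff ℝ 1 V)
    (hVc : HasCompactSupport V) {η : Eu d → ℝ} (hη : ContDiff ℝ 1 η) (hηc : HasCompactSupport η)
    {B K : ℝ} (hB : ∀ x, ‖fderiv ℝ η x‖ ≤ B)
    (hK : ∀ x, η x ≠ 0 → ‖V x‖ ≤ K)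
    (hm : ∀ x, η x ≠ 0 → frob (fderiv ℝ V x) / 2 ≤ minors (fderiv ℝ V x)) :
    ∫ x, η x ^ 2 * frob (fderiv ℝ V x) ≤
      64 * (d : ℝ) ^ 4 * B ^ 2 * K ^ 2 * (volume (tsupport η)).toReal := by
  have hd0 : (0 : ℝ) < d := by positivity
  set P : Fin d → Eu d → ℝ := fun i x => η x ^ 2 * V x i with hP
  have hPC : ∀ i, ContDiff ℝ 1 (P i) := fun i => (hη.pow 2).mul (contDiff_coord hV i)
  have hPc : ∀ i, HasCompactSupport (P i) := fun i => (compact_coord hVc i).mul_left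
  have hPd : ∀ i x a, fderiv ℝ (P i) x a =
      η x ^ 2 * fderiv ℝ V x a i + 2 * η x * fderiv ℝ η x a * V x i := by
    intro i x a
    have h1 := (((hη.differentiable (by norm_num)) x).hasFDerivAt.pow 2)
    have h2 := (((contDiff_coord hV i).differentiable (by norm_num)) x).hasFDerivAt
    have h3 := (h1.mul h2).fderiv
    rw [hP]
    erw [h3]
    simp [fderiv_coord hV]
    ring
  set T : Fin d → Fin d → Eu d → ℝ := fun i j x =>
    fderiv ℝ (P i) x (bv i) * fderiv ℝ (fun y => V y j) x (bv j) -
    fderiv ℝ (P i) x (bv j) * fderiv ℝ (fun y => V y j) x (bv i) with hT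
  have hIntg : ∀ i j a b, Integrable fun x =>
      fderiv ℝ (P i) x a * fderiv ℝ (fun y => V y j) x b := by
    intro i j a b
    refine Continuous.integrable_of_hasCompactSupport ?_ ?_
    · exact (((hPC i).continuous_fderiv (by norm_num)).clm_apply continuous_const).mul
        (((contDiff_coord hV j).continuous_fderiv (by norm_num)).clm_apply continuous_const)
    · exact HasCompactSupport.mul_right ((hPc i).fderiv_apply ℝ a)
  have hTi : ∀ i j, Integrable (T i j) := fun i j => (hIntg i j _ _).sub (hIntg i j _ _)
  have hT0 : ∀ i j, ∫ x, T i j x = 0 := by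
    intro i j
    rw [hT]
    simp only
    rw [integral_sub (hIntg i j _ _) (hIntg i j _ _),
      null_lagrangian (hPC i) (hPc i) (contDiff_coord hV j) (compact_coord hVc j), sub_self]
  set S : Eu d → ℝ := fun x => ∑ i, ∑ j, if i = j then 0 else T i j x with hS
  have hSi : Integrable S := by
    refine integrable_finsetSum _ fun i _ => integrable_finsetSum _ fun j _ => ?_
    by_cases hij : i = j
    · simp [hij]
    · simpa [hij] using hTi i j
  have hS0 : ∫ x, S x = 0 := by
    rw [hS, integral_finsetSum]
    · refine Finset.sum_eq_zero fun i _ => ?_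
      rw [integral_finsetSum]
      · refine Finset.sum_eq_zero fun j _ => ?_
        by_cases hij : i = j
        · simp [hij]
        · simpa [hij] using hT0 i j
      · intro j _
        by_cases hij : i = j
        · simp [hij]
        · simpa [hij] using hTi i j
    · intro i _
      refine integrable_finsetSum _ fun j _ => ?_
      by_cases hij : i = j
      · simp [hij]
      · simpa [hij] using hTi i j
  have hpt : ∀ x, (1 / 4) * (η x ^ 2 * frob (fderiv ℝ V x)) -
      (tsupport η).indicator (fun _ => 16 * (d : ℝ) ^ 4 * B ^ 2 * K ^ 2) x ≤ S x := by
    intro x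
    by_cases hx : η x = 0
    · have : S x = 0 := by
        refine Finset.sum_eq_zero fun i _ => Finset.sum_eq_zero fun j _ => ?_
        simp only [hT, hPd, hx]; simp
      rw [this, hx]
      have : 0 ≤ (tsupport η).indicator (fun _ => 16 * (d : ℝ) ^ 4 * B ^ 2 * K ^ 2) x :=
        Set.indicator_nonneg (fun _ _ => by positivity) x
      linarith
    · rw [Set.indicator_of_mem (subset_tsupport _ (Function.mem_support.2 hx))]
      have hKx := hK x hx
      have hmx := hm x hx
      have hBx := hB x
      have hB0 : 0 ≤ B := (norm_nonneg _).trans hBx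
      have hK0 : 0 ≤ K := (norm_nonneg _).trans hKx
      set N := fderiv ℝ V x with hN
      set s := frob N with hs
      have hs0 : 0 ≤ s := frob_nonneg N
      have hsq : Real.sqrt s ^ 2 = s := Real.sq_sqrt hs0
      have hent : ∀ i j, |N (bv j) i| ≤ Real.sqrt s := by
        intro i j
        refine Real.le_sqrt_of_sq_le ?_
        have h1 := abs_coord_le (N (bv j)) i
        have h2 := col_sq_le_frob N j
        calc |N (bv j) i| ^ 2 ≤ ‖N (bv j)‖ ^ 2 := by gcongr
          _ ≤ _ := h2
      have hη' : ∀ j, |fderiv ℝ η x (bv j)| ≤ B := fun j => by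
        have := (fderiv ℝ η x).le_opNorm (bv j)
        rw [bv_norm, mul_one, Real.norm_eq_abs] at this
        exact this.trans hBx
      have hVi : ∀ i, |V x i| ≤ K := fun i => (abs_coord_le _ _).trans hKx
      have herr : ∀ i j k l a, |2 * η x * fderiv ℝ η x (bv a) * V x i * N (bv j) k| ≤
          η x ^ 2 * s / (8 * (d : ℝ) ^ 2) + 8 * (d : ℝ) ^ 2 * B ^ 2 * K ^ 2 + 0 * l := by
        intro i j k l a
        have h1 : |2 * η x * fderiv ℝ η x (bv a) * V x i * N (bv j) k| ≤
            2 * |η x| * B * K * Real.sqrt s := by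
          rw [abs_mul, abs_mul, abs_mul, abs_mul, abs_two]
          gcongr
          · exact hη' a
          · exact hVi i
          · exact hent k j
        refine h1.trans ?_
        have h2 : η x ^ 2 * s = (|η x| * Real.sqrt s) ^ 2 := by rw [mul_pow, sq_abs, hsq]
        rw [h2, zero_mul, add_zero]
        set y := |η x| * Real.sqrt s
        have h3 : 2 * |η x| * B * K * Real.sqrt s = 2 * (B * K) * y := by simp only [y]; ring
        rw [h3]
        rw [← sub_nonneg]
        have : y ^ 2 / (8 * (d : ℝ) ^ 2) + 8 * (d : ℝ) ^ 2 * B ^ 2 * K ^ 2 - 2 * (B * K) * y =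
            (y - 8 * (d : ℝ) ^ 2 * (B * K)) ^ 2 / (8 * (d : ℝ) ^ 2) := by
          field_simp; ring
        rw [this]; positivity
      have hterm : ∀ i j, η x ^ 2 * (if i = j then 0 else
          (N (bv i) i * N (bv j) j - N (bv j) i * N (bv i) j)) -
          2 * (η x ^ 2 * s / (8 * (d : ℝ) ^ 2) + 8 * (d : ℝ) ^ 2 * B ^ 2 * K ^ 2) ≤
          if i = j then 0 else T i j x := by
        intro i j
        by_cases hij : i = j
        · simp only [hij, if_true]
          have : 0 ≤ η x ^ 2 * s / (8 * (d : ℝ) ^ 2) + 8 * (d : ℝ) ^ 2 * B ^ 2 * K ^ 2 := by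
            positivity
          linarith
        · simp only [hij, if_false, hT, hPd, fderiv_coord hV]
          have h1 := (abs_le.1 (herr i j j 0 i)).1
          have h2 := (abs_le.1 (herr i i j 0 j)).2
          rw [← hN]
          nlinarith
      have hconst : 2 * (η x ^ 2 * s / (8 * (d : ℝ) ^ 2) + 8 * (d : ℝ) ^ 2 * B ^ 2 * K ^ 2) *
          (d : ℝ) * d = ∑ _i : Fin d, ∑ _j : Fin d,
          2 * (η x ^ 2 * s / (8 * (d : ℝ) ^ 2) + 8 * (d : ℝ) ^ 2 * B ^ 2 * K ^ 2) := by
        simp; ring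
      have hfin : η x ^ 2 * minors N -
          2 * (η x ^ 2 * s / (8 * (d : ℝ) ^ 2) + 8 * (d : ℝ) ^ 2 * B ^ 2 * K ^ 2) *
          (d : ℝ) * d ≤ S x := by
        rw [hconst, minors, Finset.mul_sum, ← Finset.sum_sub_distrib]
        refine Finset.sum_le_sum fun i _ => ?_
        rw [Finset.mul_sum, ← Finset.sum_sub_distrib]
        exact Finset.sum_le_sum fun j _ => hterm i j
      have e1 : 2 * (η x ^ 2 * s / (8 * (d : ℝ) ^ 2) + 8 * (d : ℝ) ^ 2 * B ^ 2 * K ^ 2) *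
          (d : ℝ) * d = η x ^ 2 * s / 4 + 16 * (d : ℝ) ^ 4 * B ^ 2 * K ^ 2 := by
        field_simp; ring
      rw [e1] at hfin
      have : η x ^ 2 * (s / 2) ≤ η x ^ 2 * minors N := by gcongr
      linarith
  have hLi : Integrable fun x => η x ^ 2 * frob (fderiv ℝ V x) := by
    refine Continuous.integrable_of_hasCompactSupport
      ((hη.continuous.pow 2).mul (continuous_frob hV)) ?_
    refine HasCompactSupport.mul_right ?_
    exact hηc.comp_left (g := fun t : ℝ => t ^ 2) (by simp)
  have hms : MeasurableSet (tsupport η) := (isClosed_tsupport η).measurableSet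
  have hvol : volume (tsupport η) < ⊤ := hηc.isCompact.measure_lt_top
  have hIi : Integrable ((tsupport η).indicator
      (fun _ => 16 * (d : ℝ) ^ 4 * B ^ 2 * K ^ 2) : Eu d → ℝ) volume :=
    (integrable_indicator_iff hms).2 (integrableOn_const hvol.ne)
  have hle := integral_mono ((hLi.const_mul (1 / 4)).sub hIi) hSi hpt
  simp only [Pi.sub_apply] at hle
  rw [integral_sub (hLi.const_mul (1 / 4)) hIi, hS0, integral_const_mul,
    integral_indicator hms, setIntegral_const] at hle
  simp only [smul_eq_mul, Measure.real] at hle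
  linarith

end

section

/-- `C¹` maps with conformal nonvanishing derivative. -/
def IsConf {d : ℕ} (f : Eu d → Eu d) : Prop :=
  ContDiff ℝ 1 f ∧ ∀ x, 0 < ‖fderiv ℝ f x‖ ∧ ∀ v, ‖fderiv ℝ f x v‖ = ‖fderiv ℝ f x‖ * ‖v‖

/-- The inverse of the derivative. -/
def Dinv {d : ℕ} (f : Eu d → Eu d) (x : Eu d) : Eu d →L[ℝ] Eu d := (fderiv ℝ f x).inverse

lemma IsConf.exists_equiv {d : ℕ} {f : Eu d → Eu d} (hf : IsConf f) (x : Eu d) :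
    ∃ L : Eu d ≃L[ℝ] Eu d, (L : Eu d →L[ℝ] Eu d) = fderiv ℝ f x := by
  have hinj : Function.Injective (fderiv ℝ f x : Eu d →ₗ[ℝ] Eu d) := by
    rw [← LinearMap.ker_eq_bot, LinearMap.ker_eq_bot']
    intro v hv
    have h1 := (hf.2 x).2 v
    have h2 : fderiv ℝ f x v = 0 := hv
    rw [h2, norm_zero] at h1
    have h3 := (hf.2 x).1
    have : ‖v‖ = 0 := by
      rcases mul_eq_zero.1 h1.symm with h | h
      · exact absurd h h3.ne'
      · exact h
    exact norm_eq_zero.1 this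
  refine ⟨(LinearEquiv.ofInjectiveEndo _ hinj).toContinuousLinearEquiv, ?_⟩
  ext v
  rfl

lemma IsConf.inner_map {d : ℕ} {f : Eu d → Eu d} (hf : IsConf f) (x u w : Eu d) :
    inner ℝ (fderiv ℝ f x u) (fderiv ℝ f x w) = ‖fderiv ℝ f x‖ ^ 2 * inner ℝ u w := by
  have h1 := (hf.2 x).2 (u + w)
  have h2 := (hf.2 x).2 u
  have h3 := (hf.2 x).2 w
  have e1 := norm_add_sq_real (fderiv ℝ f x u) (fderiv ℝ f x w)
  have e2 := norm_add_sq_real u w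
  rw [← map_add, h1, h2, h3, mul_pow, e2] at e1
  nlinarith

lemma IsConf.Dinv_apply {d : ℕ} {f : Eu d → Eu d} (hf : IsConf f) (x v : Eu d) :
    Dinv f x (fderiv ℝ f x v) = v := by
  obtain ⟨L, hL⟩ := hf.exists_equiv x
  rw [Dinv, ← hL, ContinuousLinearMap.inverse_equiv]
  simp

lemma IsConf.apply_Dinv {d : ℕ} {f : Eu d → Eu d} (hf : IsConf f) (x v : Eu d) :
    fderiv ℝ f x (Dinv f x v) = v := by
  obtain ⟨L, hL⟩ := hf.exists_equiv x
  rw [Dinv, ← hL, ContinuousLinearMap.inverse_equiv]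
  simp

lemma IsConf.norm_Dinv {d : ℕ} {f : Eu d → Eu d} (hf : IsConf f) (x v : Eu d) :
    ‖fderiv ℝ f x‖ * ‖Dinv f x v‖ = ‖v‖ := by
  rw [← (hf.2 x).2, hf.apply_Dinv]

lemma IsConf.continuous_Dinv {d : ℕ} {f : Eu d → Eu d} (hf : IsConf f) (e : Eu d) :
    Continuous (fun x => Dinv f x e) := by
  have : Continuous (fun x => Dinv f x) := by
    rw [continuous_iff_continuousAt]
    intro x
    obtain ⟨L, hL⟩ := hf.exists_equiv x
    have h1 : ContinuousAt ContinuousLinearMap.inverse (fderiv ℝ f x) := by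
      rw [← hL]
      exact (contDiffAt_map_inverse (n := 1) L).continuousAt
    exact ContinuousAt.comp (f := fderiv ℝ f) h1 (hf.1.continuous_fderiv one_ne_zero).continuousAt
  exact this.clm_apply continuous_const

lemma local_flow {d : ℕ} {f : Eu d → Eu d} (hf : IsConf f) (x0 e : Eu d) {ε : ℝ} (hε : 0 < ε) :
    ∃ δ > 0, ∃ C ≥ 0, ∃ v : ℝ → Eu d → Eu d,
      (∀ t ∈ Set.Ioo 0 δ, ContDiffOn ℝ 1 (v t) (ball x0 δ) ∧ ∀ x ∈ ball x0 δ,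
        ‖v t x‖ ≤ C * t ∧ ‖fderiv ℝ (v t) x‖ ≤ ε ∧
        ∀ u w, inner ℝ u w = 0 →
          inner ℝ (u + fderiv ℝ (v t) x u) (w + fderiv ℝ (v t) x w) = 0) ∧
      ∀ x ∈ ball x0 δ, Tendsto (fun t => t⁻¹ • v t x) (𝓝[>] 0) (𝓝 (Dinv f x e)) := by
  obtain ⟨L, hL⟩ := hf.exists_equiv x0
  have hdf : ∀ x, HasFDerivAt f (fderiv ℝ f x) x := fun x =>
    (hf.1.differentiable one_ne_zero x).hasFDerivAt
  have hcd : ContDiffAt ℝ 1 f x0 := hf.1.contDiffAt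
  have hd0 : HasFDerivAt f (L : Eu d →L[ℝ] Eu d) x0 := by rw [hL]; exact hdf x0
  have hst := hcd.hasStrictFDerivAt' hd0 one_ne_zero
  obtain ⟨g, hgdef⟩ : ∃ g, g = hcd.localInverse hd0 one_ne_zero := ⟨_, rfl⟩
  have hg1 : ContDiffAt ℝ 1 g (f x0) := by rw [hgdef]; exact hcd.to_localInverse hd0 one_ne_zero
  have hleft : ∀ᶠ x in 𝓝 x0, g (f x) = x := by rw [hgdef]; exact hst.eventually_left_inverse
  have hright : ∀ᶠ y in 𝓝 (f x0), f (g y) = y := by rw [hgdef]; exact hst.eventually_right_inverse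
  have hgC : ∀ᶠ y in 𝓝 (f x0), ContDiffAt ℝ 1 g y := hg1.eventually (by simp)
  obtain ⟨K, s, hs, hK⟩ := hg1.exists_lipschitzOnWith
  have hΨ : ContinuousAt (fun p : ℝ × Eu d => f p.2 + p.1 • e) (0, x0) := by
    have := hf.1.continuous
    fun_prop
  have hΨ' : Tendsto (fun p : ℝ × Eu d => f p.2 + p.1 • e) (𝓝 (0, x0)) (𝓝 (f x0)) := by
    have h := hΨ.tendsto
    simpa using h
  have hfx : Tendsto (fun p : ℝ × Eu d => f p.2) (𝓝 (0, x0)) (𝓝 (f x0)) := by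
    have : ContinuousAt (fun p : ℝ × Eu d => f p.2) (0, x0) := by
      have := hf.1.continuous
      fun_prop
    exact this.tendsto
  have hdg : ContinuousAt (fderiv ℝ g) (f x0) := hg1.continuousAt_fderiv one_ne_zero
  have hchain : ∀ x, ContDiffAt ℝ 1 g (f x) → (∀ᶠ z in 𝓝 x, g (f z) = z) →
      (fderiv ℝ g (f x)).comp (fderiv ℝ f x) = ContinuousLinearMap.id ℝ (Eu d) := by
    intro x h1 h2
    have h3 : HasFDerivAt (fun z => g (f z)) ((fderiv ℝ g (f x)).comp (fderiv ℝ f x)) x :=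
      (h1.differentiableAt one_ne_zero).hasFDerivAt.comp x (hdf x)
    have h4 : HasFDerivAt (fun z => g (f z)) (ContinuousLinearMap.id ℝ (Eu d)) x :=
      (hasFDerivAt_id x).congr_of_eventuallyEq h2
    exact h3.unique h4
  have hsmall : ∀ᶠ p : ℝ × Eu d in 𝓝 (0, x0),
      ‖(fderiv ℝ g (f p.2 + p.1 • e)).comp (fderiv ℝ f p.2) - ContinuousLinearMap.id ℝ (Eu d)‖
        < ε := by
    have hc1 : Tendsto (fun p : ℝ × Eu d => fderiv ℝ g (f p.2 + p.1 • e)) (𝓝 (0, x0))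
        (𝓝 (fderiv ℝ g (f x0))) := hdg.tendsto.comp hΨ'
    have hc2 : Tendsto (fun p : ℝ × Eu d => fderiv ℝ f p.2) (𝓝 (0, x0))
        (𝓝 (fderiv ℝ f x0)) := by
      have : Continuous (fun p : ℝ × Eu d => fderiv ℝ f p.2) :=
        (hf.1.continuous_fderiv one_ne_zero).comp continuous_snd
      exact this.tendsto (0, x0)
    have hc12 : Tendsto (fun p : ℝ × Eu d => (fderiv ℝ g (f p.2 + p.1 • e)).comp (fderiv ℝ f p.2))
        (𝓝 (0, x0)) (𝓝 ((fderiv ℝ g (f x0)).comp (fderiv ℝ f x0))) := by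
      have hcc : Continuous (fun q : (Eu d →L[ℝ] Eu d) × (Eu d →L[ℝ] Eu d) => q.1.comp q.2) :=
        continuous_fst.clm_comp continuous_snd
      exact (hcc.tendsto (fderiv ℝ g (f x0), fderiv ℝ f x0)).comp (hc1.prodMk_nhds hc2)
    have hc3 := (hc12.sub_const (ContinuousLinearMap.id ℝ (Eu d))).norm
    rw [hchain x0 hg1 hleft, sub_self, norm_zero] at hc3
    exact hc3.eventually_lt_const hε
  have hall : ∀ᶠ p : ℝ × Eu d in 𝓝 (0, x0),
      f p.2 + p.1 • e ∈ s ∧ f p.2 ∈ s ∧ ContDiffAt ℝ 1 g (f p.2 + p.1 • e) ∧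
      ContDiffAt ℝ 1 g (f p.2) ∧ (∀ᶠ z in 𝓝 p.2, g (f z) = z) ∧
      (∀ᶠ z in 𝓝 (f p.2 + p.1 • e), f (g z) = z) ∧
      ‖(fderiv ℝ g (f p.2 + p.1 • e)).comp (fderiv ℝ f p.2) - ContinuousLinearMap.id ℝ (Eu d)‖
        < ε := by
    have hl2 : ∀ᶠ p : ℝ × Eu d in 𝓝 (0, x0), ∀ᶠ z in 𝓝 p.2, g (f z) = z :=
      (continuous_snd.tendsto ((0 : ℝ), x0)).eventually hleft.eventually_nhds
    filter_upwards [hΨ'.eventually hs, hfx.eventually hs, hΨ'.eventually hgC, hfx.eventually hgC,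
      hl2, hΨ'.eventually hright.eventually_nhds, hsmall] with p h1 h2 h3 h4 h5 h6 h7
    exact ⟨h1, h2, h3, h4, h5, h6, h7⟩
  obtain ⟨δ, hδ, hball⟩ := Metric.eventually_nhds_iff.1 hall
  have key : ∀ t : ℝ, ∀ x, |t| < δ → x ∈ ball x0 δ → _ := fun t x ht hx => hball (y := (t, x)) (by
    rw [Prod.dist_eq]
    exact max_lt (by simpa [Real.dist_eq] using ht) hx)
  refine ⟨δ, hδ, K * ‖e‖, by positivity, fun t x => g (f x + t • e) - x, ?_, ?_⟩
  · intro t ht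
    have hta : |t| < δ := by rw [abs_of_pos ht.1]; exact ht.2
    have hder : ∀ x ∈ ball x0 δ, HasFDerivAt (fun x => g (f x + t • e) - x)
        ((fderiv ℝ g (f x + t • e)).comp (fderiv ℝ f x) - ContinuousLinearMap.id ℝ (Eu d)) x := by
      intro x hx
      obtain ⟨h1, h2, h3, h4, h5, h6, h7⟩ := key t x hta hx
      exact ((h3.differentiableAt one_ne_zero).hasFDerivAt.comp x
        ((hdf x).add_const (t • e))).sub (hasFDerivAt_id x)
    refine ⟨?_, ?_⟩
    · intro x hx
      obtain ⟨h1, h2, h3, h4, h5, h6, h7⟩ := key t x hta hx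
      have : ContDiffAt ℝ 1 (fun x => g (f x + t • e) - x) x :=
        (ContDiffAt.comp (g := g) x h3 (hf.1.contDiffAt.add contDiffAt_const)).sub contDiffAt_id
      exact this.contDiffWithinAt
    · intro x hx
      obtain ⟨h1, h2, h3, h4, h5, h6, h7⟩ := key t x hta hx
      dsimp only at h1 h2 h3 h4 h5 h6 h7
      refine ⟨?_, ?_, ?_⟩
      · have := hK.dist_le_mul _ h1 _ h2
        rw [h5.self_of_nhds, dist_eq_norm, dist_eq_norm] at this
        calc _ ≤ _ := this
          _ = K * ‖e‖ * t := by
            rw [add_sub_cancel_left, norm_smul, Real.norm_eq_abs, abs_of_pos ht.1]; ring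
      · rw [(hder x hx).fderiv]; exact h7.le
      · intro u w huw
        rw [(hder x hx).fderiv]
        set y := f x + t • e
        have hfg : ∀ z, fderiv ℝ f (g y) (fderiv ℝ g y z) = z := by
          intro z
          have h8 : HasFDerivAt (fun z => f (g z)) ((fderiv ℝ f (g y)).comp (fderiv ℝ g y)) y :=
            (hdf (g y)).comp y (h3.differentiableAt one_ne_zero).hasFDerivAt
          have h9 : HasFDerivAt (fun z => f (g z)) (ContinuousLinearMap.id ℝ (Eu d)) y :=
            (hasFDerivAt_id y).congr_of_eventuallyEq h6
          have := h8.unique h9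
          simpa using DFunLike.congr_fun this z
        have h10 := hf.inner_map (g y) (fderiv ℝ g y (fderiv ℝ f x u))
          (fderiv ℝ g y (fderiv ℝ f x w))
        rw [hfg, hfg, hf.inner_map, huw, mul_zero] at h10
        have h11 := (hf.2 (g y)).1
        have h12 : inner ℝ (fderiv ℝ g y (fderiv ℝ f x u)) (fderiv ℝ g y (fderiv ℝ f x w)) = 0 := by
          rcases mul_eq_zero.1 h10.symm with h | h
          · exact absurd h (by positivity)
          · exact h
        simpa using h12
  · intro x hx
    obtain ⟨h1, h2, h3, h4, h5, h6, h7⟩ := key 0 x (by simpa using hδ) hx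
    dsimp only at h1 h2 h3 h4 h5 h6 h7
    have hD : fderiv ℝ g (f x) e = Dinv f x e := by
      have := hchain x h4 h5
      have h8 := DFunLike.congr_fun this (Dinv f x e)
      simpa [hf.apply_Dinv] using h8
    have h9 : HasDerivAt (fun t : ℝ => g (f x + t • e)) (fderiv ℝ g (f x) e) 0 := by
      have ha : HasDerivAt (fun t : ℝ => f x + t • e) e 0 := by
        simpa using ((hasDerivAt_id (0 : ℝ)).smul_const e).const_add (f x)
      have hb : HasFDerivAt g (fderiv ℝ g (f x)) (f x + (0 : ℝ) • e) := by
        simpa using (h4.differentiableAt one_ne_zero).hasFDerivAt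
      exact hb.comp_hasDerivAt (0 : ℝ) ha
    rw [hD] at h9
    have h10 := h9.tendsto_slope_zero_right
    simp only [zero_add, zero_smul, add_zero, h5.self_of_nhds] at h10
    exact h10

end

section

open scoped Convolution

lemma local_flow2 {d : ℕ} (hd : 2 ≤ d) {f : Eu d → Eu d} (hf : IsConf f) (x0 e : Eu d) :
    ∃ δ > 0, ∃ C ≥ 0, ∃ V : ℝ → Eu d → Eu d,
      (∀ t ∈ Set.Ioo 0 δ, ContDiff ℝ 1 (V t) ∧ HasCompactSupport (V t) ∧
        (∀ x, ‖V t x‖ ≤ C * t) ∧ ∀ x ∈ ball x0 δ,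
        frob (fderiv ℝ (V t) x) / 2 ≤ minors (fderiv ℝ (V t) x) ∧
        ∀ u w, inner ℝ u w = 0 →
          inner ℝ (u + fderiv ℝ (V t) x u) (w + fderiv ℝ (V t) x w) = 0) ∧
      ∀ x ∈ ball x0 δ, Tendsto (fun t => t⁻¹ • V t x) (𝓝[>] 0) (𝓝 (Dinv f x e)) := by
  have hd0 : (0 : ℝ) < d := by positivity
  obtain ⟨δ, hδ, C, hC, v, hv, hlim⟩ := local_flow hf x0 e
    (show (0 : ℝ) < 1 / (4 * (d : ℝ) ^ 2) by positivity)
  let χ : ContDiffBump x0 := ⟨δ / 2, 3 * δ / 4, by positivity, by linarith⟩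
  have hχ1 : ∀ x ∈ ball x0 (δ / 2), χ =ᶠ[𝓝 x] 1 := fun x hx => χ.eventuallyEq_one_of_mem_ball hx
  refine ⟨δ / 2, by positivity, C, hC, fun t x => χ x • v t x, ?_, ?_⟩
  · intro t ht
    have ht' : t ∈ Set.Ioo 0 δ := ⟨ht.1, by linarith [ht.2]⟩
    obtain ⟨hcd, hpt⟩ := hv t ht'
    have hcs : HasCompactSupport (fun x => χ x • v t x) :=
      χ.hasCompactSupport.smul_right
    refine ⟨?_, hcs, ?_, ?_⟩
    · rw [contDiff_iff_contDiffAt]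
      intro x
      by_cases hx : x ∈ ball x0 δ
      · exact χ.contDiffAt.smul (hcd.contDiffAt (isOpen_ball.mem_nhds hx))
      · have hx' : x ∉ tsupport χ := by
          rw [χ.tsupport_eq]
          intro h
          apply hx
          have h2 : dist x x0 ≤ 3 * δ / 4 := h
          rw [mem_ball]; linarith
        have : (fun x => χ x • v t x) =ᶠ[𝓝 x] fun _ => 0 := by
          filter_upwards [notMem_tsupport_iff_eventuallyEq.1 hx'] with y hy
          simp [hy]
        exact contDiffAt_const.congr_of_eventuallyEq this
    · intro x
      by_cases hx : x ∈ ball x0 δ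
      · rw [norm_smul, Real.norm_eq_abs, abs_of_nonneg χ.nonneg]
        calc _ ≤ 1 * ‖v t x‖ := by gcongr; exact χ.le_one
          _ ≤ _ := by rw [one_mul]; exact (hpt x hx).1
      · have : χ x = 0 := χ.zero_of_le_dist (by
          have h2 : ¬ dist x x0 < δ := hx
          show 3 * δ / 4 ≤ _
          linarith)
        simp only [this, zero_smul, norm_zero]
        exact mul_nonneg hC ht.1.le
    · intro x hx
      have hEq : (fun x => χ x • v t x) =ᶠ[𝓝 x] v t := by
        filter_upwards [hχ1 x hx] with y hy
        simp [hy]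
      rw [hEq.fderiv_eq]
      obtain ⟨h1, h2, h3⟩ := hpt x (ball_subset_ball (by linarith) hx)
      exact ⟨frob_le_minors hd _ h2 h3, h3⟩
  · intro x hx
    have h1 : χ x = 1 := (hχ1 x hx).self_of_nhds
    simp only [h1, one_smul]
    exact hlim x (ball_subset_ball (by linarith) hx)

set_option maxHeartbeats 1000000 in
lemma mollified_killing {d : ℕ} (hd : 2 ≤ d) {f : Eu d → Eu d} (hf : IsConf f) (x0 e : Eu d) :
    ∃ δ > 0, ∀ k : Eu d → ℝ, ContDiff ℝ 1 k → tsupport k ⊆ closedBall 0 δ →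
      ∀ x ∈ ball x0 δ, ∀ u w : Eu d, inner ℝ u w = 0 →
      inner ℝ (fderiv ℝ (k ⋆[ContinuousLinearMap.lsmul ℝ ℝ, volume] fun y => Dinv f y e) x u) w
      + inner ℝ u
        (fderiv ℝ (k ⋆[ContinuousLinearMap.lsmul ℝ ℝ, volume] fun y => Dinv f y e) x w) = 0 := by
  obtain ⟨δ, hδ, C, hC, V, hV, hlim⟩ := local_flow2 hd hf x0 e
  refine ⟨δ / 4, by positivity, ?_⟩
  intro k hk hks x hx u w huw
  have hkc : HasCompactSupport k := (isCompact_closedBall _ _).of_isClosed_subset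
    (isClosed_tsupport k) hks
  have hZ := hf.continuous_Dinv e
  have hmem : ∀ z ∈ tsupport k, x - z ∈ ball x0 (δ / 2) := by
    intro z hz
    have h1 : ‖z‖ ≤ δ / 4 := by simpa using hks hz
    have h2 : ‖x - x0‖ < δ / 4 := by rw [← dist_eq_norm]; exact hx
    rw [mem_ball, dist_eq_norm]
    calc ‖x - z - x0‖ = ‖(x - x0) - z‖ := by congr 1; abel
      _ ≤ ‖x - x0‖ + ‖z‖ := norm_sub_le _ _
      _ < _ := by linarith
  have hIoo : ∀ᶠ t : ℝ in 𝓝[>] 0, t ∈ Set.Ioo 0 δ := Ioo_mem_nhdsGT hδ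
  -- first order limit
  have hfirst : ∀ a : Eu d, Tendsto
      (fun t : ℝ => ∫ z, k z • (t⁻¹ • fderiv ℝ (V t) (x - z) a)) (𝓝[>] 0)
      (𝓝 (fderiv ℝ (k ⋆[ContinuousLinearMap.lsmul ℝ ℝ, volume] fun y => Dinv f y e) x a)) := by
    intro a
    rw [conv_deriv_left hk hkc hZ, convolution_def]
    have hka : Continuous fun y => fderiv ℝ k y a :=
      (hk.continuous_fderiv one_ne_zero).clm_apply continuous_const
    have hkac : HasCompactSupport fun y => fderiv ℝ k y a := hkc.fderiv_apply ℝ a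
    have hdom : Tendsto (fun t : ℝ => ∫ z, fderiv ℝ k z a • (t⁻¹ • V t (x - z))) (𝓝[>] 0)
        (𝓝 (∫ z, fderiv ℝ k z a • Dinv f (x - z) e)) := by
      refine tendsto_integral_filter_of_dominated_convergence (fun z => |fderiv ℝ k z a| * C)
        ?_ ?_ ?_ ?_
      · filter_upwards [hIoo] with t ht
        have := (hV t ht).1.continuous
        exact (Continuous.smul hka (by fun_prop)).aestronglyMeasurable
      · filter_upwards [hIoo] with t ht
        refine Eventually.of_forall fun z => ?_
        rw [norm_smul, norm_smul, Real.norm_eq_abs, norm_inv, Real.norm_eq_abs, abs_of_pos ht.1]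
        have h3 := (hV t ht).2.2.1 (x - z)
        have h4 : t⁻¹ * ‖V t (x - z)‖ ≤ C := by
          rw [inv_mul_le_iff₀ ht.1]; linarith
        gcongr
      · exact (Continuous.integrable_of_hasCompactSupport hka hkac).abs.mul_const C
      · refine Eventually.of_forall fun z => ?_
        by_cases hz : z ∈ tsupport k
        · exact (hlim (x - z) (ball_subset_ball (by linarith) (hmem z hz))).const_smul _
        · have h5 : fderiv ℝ k z = 0 := by
            by_contra h
            exact hz (support_fderiv_subset ℝ h)
          simp [h5]
    refine (hdom.congr' ?_)
    filter_upwards [hIoo] with t ht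
    obtain ⟨h1, h2, h3, h4⟩ := hV t ht
    have e1 := conv_deriv_left hk hkc h1.continuous x a
    have e2 := conv_deriv_right hk.continuous h1 h2 x a
    rw [e1, convolution_def, convolution_def] at e2
    simp only [ContinuousLinearMap.lsmul_apply] at e2
    calc ∫ z, fderiv ℝ k z a • (t⁻¹ • V t (x - z))
        = ∫ z, t⁻¹ • (fderiv ℝ k z a • V t (x - z)) := by
          congr 1; ext1 z; rw [smul_comm]
      _ = t⁻¹ • ∫ z, k z • fderiv ℝ (V t) (x - z) a := by rw [integral_smul, e2]
      _ = _ := by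
          rw [← integral_smul]; congr 1; ext1 z; rw [smul_comm]
  have hL := ((hfirst u).inner (𝕜 := ℝ) (tendsto_const_nhds (x := w))).add
    ((tendsto_const_nhds (x := u)).inner (𝕜 := ℝ) (hfirst w))
  refine tendsto_nhds_unique hL ?_
  -- bump for the energy estimate
  let η : ContDiffBump x0 := ⟨δ / 2, 3 * δ / 4, by positivity, by linarith⟩
  have hη : ContDiff ℝ 1 η := η.contDiff
  obtain ⟨B, hB⟩ := (hη.continuous_fderiv one_ne_zero).bounded_above_of_compact_support
    (η.hasCompactSupport.fderiv ℝ)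
  obtain ⟨M, hM⟩ := hk.continuous.bounded_above_of_compact_support hkc
  have hM0 : 0 ≤ M := (norm_nonneg _).trans (hM 0)
  set C' := 64 * (d : ℝ) ^ 4 * B ^ 2 * C ^ 2 * (volume (tsupport η)).toReal with hC'
  have hbound : ∀ᶠ t : ℝ in 𝓝[>] 0,
      ‖(inner ℝ (∫ z, k z • (t⁻¹ • fderiv ℝ (V t) (x - z) u)) w : ℝ) +
        inner ℝ u (∫ z, k z • (t⁻¹ • fderiv ℝ (V t) (x - z) w))‖ ≤ M * ‖u‖ * ‖w‖ * C' * t := by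
    filter_upwards [hIoo] with t ht
    obtain ⟨h1, h2, h3, h4⟩ := hV t ht
    have hcac := caccioppoli hd h1 h2 hη η.hasCompactSupport hB (K := C * t) (fun y _ => h3 y)
      (fun y hy => (h4 y (by
        have : y ∈ Function.support η := hy
        rw [η.support_eq] at this
        exact ball_subset_ball (by show 3 * δ / 4 ≤ δ; linarith) this)).1)
    have hcont : ∀ a : Eu d, Continuous fun z => fderiv ℝ (V t) (x - z) a := fun a =>
      ((h1.continuous_fderiv one_ne_zero).comp (continuous_const.sub continuous_id)).clm_apply
        continuous_const
    have hIntg : ∀ a : Eu d, Integrable (fun z => k z • (t⁻¹ • fderiv ℝ (V t) (x - z) a)) := by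
      intro a
      have c1 : Continuous fun z => t⁻¹ • fderiv ℝ (V t) (x - z) a := (hcont a).const_smul t⁻¹
      have c2 : Continuous fun z => k z • (t⁻¹ • fderiv ℝ (V t) (x - z) a) := hk.continuous.smul c1
      have c3 : HasCompactSupport fun z => k z • (t⁻¹ • fderiv ℝ (V t) (x - z) a) :=
        HasCompactSupport.smul_right (f := k) hkc
      exact c2.integrable_of_hasCompactSupport c3
    have hfr : Continuous fun z => η (x - z) ^ 2 * frob (fderiv ℝ (V t) (x - z)) :=
      ((hη.continuous.pow 2).mul (continuous_frob h1)).comp (continuous_const.sub continuous_id)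
    have hfr' : HasCompactSupport fun z => η z ^ 2 * frob (fderiv ℝ (V t) z) := by
      have : HasCompactSupport fun z => η z ^ 2 := by
        simp_rw [pow_two]
        exact η.hasCompactSupport.mul_right
      exact this.mul_right
    have hfi : Integrable fun z => η (x - z) ^ 2 * frob (fderiv ℝ (V t) (x - z)) := by
      have h5 : Integrable fun z => η z ^ 2 * frob (fderiv ℝ (V t) z) :=
        ((hη.continuous.pow 2).mul (continuous_frob h1)).integrable_of_hasCompactSupport hfr'
      exact h5.comp_sub_left x
    rw [real_inner_comm, ← integral_inner (hIntg u), ← integral_inner (hIntg w),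
      ← integral_add ((hIntg u).const_inner w) ((hIntg w).const_inner u)]
    have hptw : ∀ z, ‖(inner ℝ w (k z • (t⁻¹ • fderiv ℝ (V t) (x - z) u)) : ℝ) +
        inner ℝ u (k z • (t⁻¹ • fderiv ℝ (V t) (x - z) w))‖ ≤
        (M * t⁻¹ * ‖u‖ * ‖w‖) * (η (x - z) ^ 2 * frob (fderiv ℝ (V t) (x - z))) := by
      intro z
      have ht0 : 0 < t⁻¹ := inv_pos.2 ht.1
      by_cases hz : z ∈ tsupport k
      · have hm := hmem z hz
        have hη1 : η (x - z) = 1 := η.one_of_mem_closedBall (ball_subset_closedBall hm)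
        have ho := (h4 (x - z) (ball_subset_ball (by linarith) hm)).2 u w huw
        set N := fderiv ℝ (V t) (x - z)
        have ho2 : (inner ℝ w (N u) : ℝ) + inner ℝ u (N w) = - inner ℝ (N u) (N w) := by
          rw [inner_add_left, inner_add_right, inner_add_right, huw] at ho
          rw [real_inner_comm]; linarith
        have e1 : (inner ℝ w (k z • (t⁻¹ • N u)) : ℝ) + inner ℝ u (k z • (t⁻¹ • N w)) =
            k z * t⁻¹ * (- inner ℝ (N u) (N w)) := by
          rw [← ho2]
          simp only [inner_smul_right]; ring
        rw [e1, hη1, norm_mul, norm_mul, norm_neg, Real.norm_of_nonneg ht0.le]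
        have hk1 := hM z
        have hN2 : ‖(inner ℝ (N u) (N w) : ℝ)‖ ≤ frob N * (‖u‖ * ‖w‖) := by
          refine (norm_inner_le_norm _ _).trans ?_
          have a1 := norm_sq_apply_le_frob N u
          have a2 := norm_sq_apply_le_frob N w
          have hf0 := frob_nonneg N
          have : ‖N u‖ ≤ √(frob N) * ‖u‖ := by
            apply (sq_le_sq₀ (by positivity) (by positivity)).1
            rw [mul_pow, Real.sq_sqrt hf0]; exact a1
          have : ‖N w‖ ≤ √(frob N) * ‖w‖ := by
            apply (sq_le_sq₀ (by positivity) (by positivity)).1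
            rw [mul_pow, Real.sq_sqrt hf0]; exact a2
          calc _ ≤ (√(frob N) * ‖u‖) * (√(frob N) * ‖w‖) := by gcongr
            _ = (√(frob N) * √(frob N)) * (‖u‖ * ‖w‖) := by ring
            _ = _ := by rw [Real.mul_self_sqrt hf0]
        calc _ ≤ M * t⁻¹ * (frob N * (‖u‖ * ‖w‖)) := by gcongr
          _ = _ := by ring
      · have : k z = 0 := image_eq_zero_of_notMem_tsupport hz
        simp only [this, zero_smul, inner_zero_right, add_zero, norm_zero]
        have := frob_nonneg (fderiv ℝ (V t) (x - z))
        positivity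
    calc _ ≤ ∫ z, (M * t⁻¹ * ‖u‖ * ‖w‖) * (η (x - z) ^ 2 * frob (fderiv ℝ (V t) (x - z))) :=
          norm_integral_le_of_norm_le (hfi.const_mul _) (Eventually.of_forall hptw)
      _ = (M * t⁻¹ * ‖u‖ * ‖w‖) * ∫ z, η z ^ 2 * frob (fderiv ℝ (V t) z) := by
          rw [integral_const_mul,
            integral_sub_left_eq_self (fun z => η z ^ 2 * frob (fderiv ℝ (V t) z))]
      _ ≤ (M * t⁻¹ * ‖u‖ * ‖w‖) * (C' * t ^ 2) := by
          have ht0 : 0 < t⁻¹ := inv_pos.2 ht.1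
          gcongr
          refine hcac.trans (le_of_eq ?_)
          rw [hC']; ring
      _ = _ := by
          have := ht.1.ne'
          field_simp
  refine squeeze_zero_norm' hbound ?_
  have : Tendsto (fun t : ℝ => M * ‖u‖ * ‖w‖ * C' * t) (𝓝 0) (𝓝 (M * ‖u‖ * ‖w‖ * C' * 0)) :=
    tendsto_id.const_mul _
  rw [mul_zero] at this
  exact this.mono_left nhdsWithin_le_nhds

end

section

open scoped ContDiff

/-- The infinitesimal orthogonality-preservation property. -/
def CK {d : ℕ} (T : Eu d →L[ℝ] Eu d) : Prop :=
  ∀ u w : Eu d, inner ℝ u w = 0 → inner ℝ (T u) w + inner ℝ u (T w) = 0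

lemma CK.symm_eq {d : ℕ} {T : Eu d →L[ℝ] Eu d} (h : CK T) (i : Fin d) (u w : Eu d) :
    inner ℝ (T u) w + inner ℝ u (T w) = 2 * inner ℝ (T (bv i)) (bv i) * inner ℝ u w := by
  have hsq : ∀ u : Eu d, inner ℝ (T u) u = inner ℝ (T (bv i)) (bv i) * inner ℝ u u := by
    intro u
    have h1 := h (u + ‖u‖ • bv i) (u - ‖u‖ • bv i) (by
      simp only [inner_add_left, inner_sub_right, inner_smul_left, inner_smul_right,
        real_inner_self_eq_norm_sq, bv_norm, real_inner_comm u (bv i)]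
      simp; ring)
    simp only [map_add, map_sub, map_smul, inner_add_left, inner_sub_right, inner_smul_left,
      inner_smul_right] at h1
    rw [real_inner_comm (T u) u, real_inner_comm (T (bv i)) (bv i), real_inner_comm (T (bv i)) u,
      real_inner_comm (T u) (bv i)] at h1
    rw [real_inner_self_eq_norm_sq u]
    simp at h1
    linarith
  have h1 := hsq (u + w)
  have h2 := hsq u
  have h3 := hsq w
  simp only [map_add, inner_add_left, inner_add_right] at h1
  rw [real_inner_comm (T w) u, real_inner_comm u w] at *
  linarith

/-- Directional derivative. -/
def DD {d : ℕ} (h : Eu d → ℝ) (u : Eu d) : Eu d → ℝ := fun x => fderiv ℝ h x u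

lemma DD_smooth {d : ℕ} {h : Eu d → ℝ} (hh : ContDiff ℝ ∞ h) (u : Eu d) : ContDiff ℝ ∞ (DD h u) :=
  (hh.fderiv_right (m := ∞) (by simp)).clm_apply contDiff_const

lemma smooth_diff {d : ℕ} {h : Eu d → ℝ} (hh : ContDiff ℝ ∞ h) (x : Eu d) :
    DifferentiableAt ℝ h x := hh.differentiable (by simp) x

lemma DD_comm {d : ℕ} {h : Eu d → ℝ} (hh : ContDiff ℝ ∞ h) (u v : Eu d) (x : Eu d) :
    DD (DD h u) v x = DD (DD h v) u x := by
  have hs : IsSymmSndFDerivAt ℝ h x := hh.contDiffAt.isSymmSndFDerivAt (by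
    simp only [minSmoothness_of_isRCLikeNormedField]
    exact ENat.LEInfty.out)
  have hd : DifferentiableAt ℝ (fderiv ℝ h) x :=
    (hh.fderiv_right (m := ∞) (by simp)).differentiable (by simp) x
  have e : ∀ u v, DD (DD h u) v x = fderiv ℝ (fderiv ℝ h) x v u := by
    intro u v
    unfold DD
    rw [fderiv_clm_apply hd (differentiableAt_const u)]
    simp
  rw [e, e]
  exact hs v u

lemma DD_congr {d : ℕ} {U : Set (Eu d)} (hU : IsOpen U) {g h : Eu d → ℝ}
    (hgh : ∀ x ∈ U, g x = h x) (v : Eu d) : ∀ x ∈ U, DD g v x = DD h v x := by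
  intro x hx
  have : g =ᶠ[𝓝 x] h := by filter_upwards [hU.mem_nhds hx] with y hy using hgh y hy
  unfold DD
  rw [this.fderiv_eq]

lemma DD_add {d : ℕ} {g h : Eu d → ℝ} (hg : ContDiff ℝ ∞ g) (hh : ContDiff ℝ ∞ h) (v x : Eu d) :
    DD (fun y => g y + h y) v x = DD g v x + DD h v x := by
  unfold DD
  rw [fderiv_fun_add (smooth_diff hg x) (smooth_diff hh x)]; rfl

lemma DD_sub {d : ℕ} {g h : Eu d → ℝ} (hg : ContDiff ℝ ∞ g) (hh : ContDiff ℝ ∞ h) (v x : Eu d) :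
    DD (fun y => g y - h y) v x = DD g v x - DD h v x := by
  unfold DD
  rw [fderiv_fun_sub (smooth_diff hg x) (smooth_diff hh x)]; rfl

lemma DD_mul {d : ℕ} (a : ℝ) {h : Eu d → ℝ} (hh : ContDiff ℝ ∞ h) (v x : Eu d) :
    DD (fun y => a * h y) v x = a * DD h v x := by
  unfold DD
  rw [fderiv_const_mul (smooth_diff hh x)]; rfl

lemma clm_ext_bv {d : ℕ} {F : Type*} [NormedAddCommGroup F] [NormedSpace ℝ F]
    {L M : Eu d →L[ℝ] F} (h : ∀ i, L (bv i) = M (bv i)) : L = M := by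
  ext u
  rw [vec_eq_sum u, map_sum, map_sum]
  simp [h]

lemma const_of_DD {d : ℕ} {U : Set (Eu d)} (hU : IsOpen U) (hU' : IsPreconnected U) {h : Eu d → ℝ}
    (hh : ContDiff ℝ ∞ h) (h0 : ∀ x ∈ U, ∀ i, DD h (bv i) x = 0) {x y : Eu d} (hx : x ∈ U)
    (hy : y ∈ U) : h x = h y := by
  refine hU.is_const_of_fderiv_eq_zero (𝕜 := ℝ) hU' (fun x _ => (smooth_diff hh x).differentiableWithinAt)
    ?_ hx hy
  intro x hx
  exact clm_ext_bv fun i => by simpa [DD] using h0 x hx i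

/-- The quadratic model conformal fields. -/
def QQ {d : ℕ} (b : Eu d) (T : Eu d →L[ℝ] Eu d) (c : Eu d) (x : Eu d) : Eu d :=
  b + T x + (2 * inner ℝ c x) • x - (inner ℝ x x : ℝ) • c

lemma QQ_hasFDerivAt {d : ℕ} (b : Eu d) (T : Eu d →L[ℝ] Eu d) (c x : Eu d) :
    ∃ L : Eu d →L[ℝ] Eu d, HasFDerivAt (QQ b T c) L x ∧ ∀ u,
      L u = T u + (2 * inner ℝ c x) • u + (2 * inner ℝ c u) • x - (2 * inner ℝ x u : ℝ) • c := by
  have h1 : HasFDerivAt (fun x => (2 * inner ℝ c x : ℝ)) ((2 : ℝ) • innerSL ℝ c) x := by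
    exact ((innerSL ℝ c).hasFDerivAt (x := x)).const_mul 2
  have h2 : HasFDerivAt (fun x => (inner ℝ x x : ℝ)) ((2 : ℝ) • innerSL ℝ x) x := by
    have := (hasFDerivAt_id x).inner ℝ (hasFDerivAt_id x)
    refine this.congr_fderiv ?_
    ext u
    simp [real_inner_comm]
    rw [real_inner_comm]; ring
  have h3 := (((hasFDerivAt_const b x).add (T.hasFDerivAt (x := x))).add
    (h1.smul (hasFDerivAt_id x))).sub (h2.smul_const c)
  refine ⟨_, h3, fun u => ?_⟩
  simp [add_assoc]

lemma QQ_contDiff {d : ℕ} {n : WithTop ℕ∞} (b : Eu d) (T : Eu d →L[ℝ] Eu d) (c : Eu d) :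
    ContDiff ℝ n (QQ b T c) := by
  unfold QQ
  have h1 : ContDiff ℝ n fun x : Eu d => (inner ℝ c x : ℝ) := contDiff_const.inner ℝ contDiff_id
  have h2 : ContDiff ℝ n fun x : Eu d => (inner ℝ x x : ℝ) := contDiff_id.inner ℝ contDiff_id
  exact ((contDiff_const.add T.contDiff).add ((contDiff_const.mul h1).smul contDiff_id)).sub
    (h2.smul contDiff_const)

lemma classification {d : ℕ} (hd : 3 ≤ d) {Y : Eu d → Eu d} (hY : ContDiff ℝ ∞ Y)
    {x0 : Eu d} {δ : ℝ} (hδ : 0 < δ) (hck : ∀ x ∈ ball x0 δ, CK (fderiv ℝ Y x)) :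
    ∃ b T c, CK T ∧ ∀ x ∈ ball x0 δ, Y x = QQ b T c x := by
  set U := ball x0 δ with hUdef
  have hU : IsOpen U := isOpen_ball
  have hU' : IsPreconnected U := (convex_ball x0 δ).isPreconnected
  have hx0 : x0 ∈ U := mem_ball_self hδ
  let i0 : Fin d := ⟨0, by omega⟩
  set y : Eu d → Eu d → ℝ := fun w x => inner ℝ (Y x) w with hy
  have hys : ∀ w, ContDiff ℝ ∞ (y w) := fun w => hY.inner ℝ contDiff_const
  have hDy : ∀ w u x, DD (y w) u x = inner ℝ (fderiv ℝ Y x u) w := by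
    intro w u x
    unfold DD
    have := ((hY.differentiable (by simp) x).hasFDerivAt.inner ℝ (hasFDerivAt_const w x)).fderiv
    simp only [hy]
    rw [this]
    simp
  set ρ : Eu d → ℝ := DD (y (bv i0)) (bv i0) with hρ
  have hρs : ContDiff ℝ ∞ ρ := DD_smooth (hys _) _
  have s1 : ∀ u w, ∀ x ∈ U, DD (y w) u x + DD (y u) w x = 2 * inner ℝ u w * ρ x := by
    intro u w x hx
    have := (hck x hx).symm_eq i0 u w
    rw [hρ, hDy, hDy, hDy, real_inner_comm u, this]; ring
  have s1' : ∀ u w v, ∀ x ∈ U, DD (DD (y w) u) v x + DD (DD (y u) w) v x =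
      2 * inner ℝ u w * DD ρ v x := by
    intro u w v x hx
    have := DD_congr hU (s1 u w) v x hx
    rwa [DD_add (DD_smooth (hys _) _) (DD_smooth (hys _) _), DD_mul _ hρs] at this
  have s2 : ∀ u w v, ∀ x ∈ U, DD (DD (y w) u) v x =
      inner ℝ u w * DD ρ v x + inner ℝ v w * DD ρ u x - inner ℝ u v * DD ρ w x := by
    intro u w v x hx
    have a1 := s1' u w v x hx
    have a2 := s1' v w u x hx
    have a3 := s1' u v w x hx
    rw [DD_comm (hys w) v u] at a2
    rw [DD_comm (hys u) w v] at a1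
    rw [DD_comm (hys v) w u] at a2
    linarith
  have s3 : ∀ u w v l, ∀ x ∈ U,
      inner ℝ u w * DD (DD ρ v) l x + inner ℝ v w * DD (DD ρ u) l x
        - inner ℝ u v * DD (DD ρ w) l x =
      inner ℝ u w * DD (DD ρ l) v x + inner ℝ l w * DD (DD ρ u) v x
        - inner ℝ u l * DD (DD ρ w) v x := by
    have aux : ∀ u w v l, ∀ x ∈ U, DD (DD (DD (y w) u) v) l x =
      inner ℝ u w * DD (DD ρ v) l x + inner ℝ v w * DD (DD ρ u) l x
        - inner ℝ u v * DD (DD ρ w) l x := by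
      intro u w v l x hx
      have h1 := DD_congr hU (s2 u w v) l x hx
      have c : ∀ (a : ℝ) (z : Eu d), ContDiff ℝ ∞ fun x => a * DD ρ z x := fun a z =>
        contDiff_const.mul (DD_smooth hρs z)
      rw [h1, DD_sub ((c _ _).add (c _ _)) (c _ _), DD_add (c _ _) (c _ _),
        DD_mul _ (DD_smooth hρs _), DD_mul _ (DD_smooth hρs _), DD_mul _ (DD_smooth hρs _)]
    intro u w v l x hx
    rw [← aux u w v l x hx, ← aux u w l v x hx]
    exact DD_comm (DD_smooth (hys w) u) v l x
  have s4 : ∀ i j, ∀ x ∈ U, DD (DD ρ (bv j)) (bv i) x = 0 := by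
    intro i j x hx
    have third : ∀ i j : Fin d, ∃ k, k ≠ i ∧ k ≠ j := by
      intro i j
      have : ∃ k ∈ (Finset.univ : Finset (Fin d)), k ∉ ({i, j} : Finset (Fin d)) := by
        apply Finset.exists_mem_notMem_of_card_lt_card
        have := Finset.card_le_two (a := i) (b := j)
        simp; omega
      obtain ⟨k, _, hk⟩ := this
      simp at hk
      exact ⟨k, hk.1, hk.2⟩
    have hopp : ∀ i j : Fin d, i ≠ j →
        DD (DD ρ (bv i)) (bv i) x = - DD (DD ρ (bv j)) (bv j) x := by
      intro i j hij
      have := s3 (bv j) (bv i) (bv j) (bv i) x hx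
      simp only [inner_bv_bv, hij.symm, if_true, if_false] at this
      linarith
    obtain ⟨k, hki, hkj⟩ := third i j
    by_cases hij : i = j
    · subst hij
      obtain ⟨m, hmi, hmk⟩ := third i k
      have a1 := hopp i k hki.symm
      have a2 := hopp i m hmi.symm
      have a3 := hopp k m hmk.symm
      linarith
    · have := s3 (bv j) (bv k) (bv k) (bv i) x hx
      simp only [inner_bv_bv, hki.symm, hkj.symm, Ne.symm hij, if_true, if_false] at this
      linarith
  obtain ⟨g, hg⟩ : ∃ g : Eu d, ∀ x ∈ U, ∀ v, DD ρ v x = inner ℝ g v := by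
    refine ⟨∑ j, DD ρ (bv j) x0 • bv j, fun x hx v => ?_⟩
    have h1 : fderiv ℝ ρ x = innerSL ℝ (∑ j, DD ρ (bv j) x0 • bv j) := by
      apply clm_ext_bv
      intro i
      have := const_of_DD hU hU' (DD_smooth hρs (bv i)) (fun x hx k => s4 k i x hx) hx hx0
      simp only [innerSL_apply_apply, sum_inner, inner_smul_left, inner_bv_bv]
      simp
      exact this
    unfold DD at *
    rw [h1]; rfl
  set c : Eu d := (1 / 2 : ℝ) • g with hc
  set Q := QQ 0 (0 : Eu d →L[ℝ] Eu d) c with hQ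
  have hQs : ContDiff ℝ ∞ Q := QQ_contDiff _ _ _
  have hQd : ∀ x u, fderiv ℝ Q x u =
      (inner ℝ g x : ℝ) • u + (inner ℝ g u : ℝ) • x - (inner ℝ x u : ℝ) • g := by
    intro x u
    obtain ⟨L, hL, hLu⟩ := QQ_hasFDerivAt 0 (0 : Eu d →L[ℝ] Eu d) c x
    rw [hQ, hL.fderiv, hLu, hc]
    simp [inner_smul_left, smul_smul]
    ring_nf
  set R : Eu d → Eu d := fun x => Y x - Q x with hR
  have hRs : ContDiff ℝ ∞ R := hY.sub hQs
  have hRd : ∀ x, fderiv ℝ R x = fderiv ℝ Y x - fderiv ℝ Q x := fun x =>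
    fderiv_fun_sub (hY.differentiable (by simp) x) (hQs.differentiable (by simp) x)
  have hRc : ∀ x ∈ U, fderiv ℝ R x = fderiv ℝ R x0 := by
    intro x hx
    ext1 u
    refine ext_inner_right ℝ fun w => ?_
    have hq : ∀ x, inner ℝ (fderiv ℝ Q x u) w =
        inner ℝ u w * inner ℝ g x + inner ℝ g u * inner ℝ w x - inner ℝ g w * inner ℝ u x := by
      intro x
      rw [hQd, inner_sub_left, inner_add_left, inner_smul_left, inner_smul_left, inner_smul_left,
        real_inner_comm u x, real_inner_comm w x]
      simp; ring
    have hlin : ∀ a : Eu d, ContDiff ℝ ∞ fun x : Eu d => (inner ℝ a x : ℝ) := fun a =>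
      contDiff_const.inner ℝ contDiff_id
    have hlinD : ∀ a v x : Eu d, DD (fun x : Eu d => (inner ℝ a x : ℝ)) v x = inner ℝ a v := by
      intro a v x
      have : fderiv ℝ (fun x : Eu d => (inner ℝ a x : ℝ)) x = innerSL ℝ a :=
        ((innerSL ℝ a).hasFDerivAt (x := x)).fderiv
      unfold DD
      rw [this]; rfl
    set q : Eu d → ℝ := fun x => inner ℝ u w * inner ℝ g x + inner ℝ g u * inner ℝ w x
      - inner ℝ g w * inner ℝ u x with hqdef
    have c1 : ∀ (α : ℝ) (a : Eu d), ContDiff ℝ ∞ fun x : Eu d => α * (inner ℝ a x : ℝ) :=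
      fun α a => contDiff_const.mul (hlin a)
    have hqs : ContDiff ℝ ∞ q := ((c1 _ _).add (c1 _ _)).sub (c1 _ _)
    have hconst := const_of_DD hU hU' (h := fun x => DD (y w) u x - q x)
      ((DD_smooth (hys w) u).sub hqs) (by
        intro z hz i
        rw [DD_sub (DD_smooth (hys w) u) hqs, s2 u w (bv i) z hz, hqdef,
          DD_sub ((c1 _ _).add (c1 _ _)) (c1 _ _), DD_add (c1 _ _) (c1 _ _), DD_mul _ (hlin _),
          DD_mul _ (hlin _), DD_mul _ (hlin _), hlinD, hlinD, hlinD, hg z hz, hg z hz, hg z hz,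
          real_inner_comm w (bv i)]
        ring) hx hx0
    simp only [hDy] at hconst
    rw [hRd, hRd, sub_apply, sub_apply, inner_sub_left,
      inner_sub_left, hq, hq]
    exact hconst
  set T := fderiv ℝ R x0 with hT
  have hfin : ∀ x ∈ U, R x - T x = R x0 - T x0 := by
    intro x hx
    have hdiff : ∀ x, HasFDerivAt (fun x => R x - T x) (fderiv ℝ R x - T) x := fun x =>
      (hRs.differentiable (by simp) x).hasFDerivAt.sub T.hasFDerivAt
    refine hU.is_const_of_fderiv_eq_zero (𝕜 := ℝ) (f := fun x => R x - T x) hU'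
      (fun x _ => (hdiff x).differentiableAt.differentiableWithinAt) ?_ hx hx0
    intro z hz
    rw [(hdiff z).fderiv, hRc z hz, sub_self]; rfl
  refine ⟨R x0 - T x0, T, c, ?_, ?_⟩
  · intro u w huw
    have h1 := hck x0 hx0 u w huw
    rw [hT, hRd, sub_apply, sub_apply, inner_sub_left,
      inner_sub_right, hQd, hQd]
    simp only [inner_sub_left, inner_add_left, inner_smul_left, inner_sub_right, inner_add_right,
      inner_smul_right, huw]
    simp only [conj_trivial, mul_zero]
    rw [real_inner_comm g u, real_inner_comm x0 u]
    linarith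
  · intro x hx
    have h1 := hfin x hx
    have h2 : Y x = (R x0 - T x0) + T x + Q x := by
      rw [← h1, hR]; simp
    rw [h2, hQ, QQ, QQ]
    simp; abel

end

section

open scoped Convolution ContDiff

/-- The space of parameters of model fields. -/
def KillSub (d : ℕ) : Submodule ℝ (Eu d × (Eu d →L[ℝ] Eu d) × Eu d) where
  carrier := {p | CK p.2.1}
  add_mem' := by
    intro p q hp hq u w huw
    have h1 := hp u w huw
    have h2 := hq u w huw
    simp only [Prod.snd_add, Prod.fst_add, add_apply, inner_add_left, inner_add_right]
    linarith
  zero_mem' := by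
    intro u w huw
    simp
  smul_mem' := by
    intro a p hp u w huw
    have h1 := hp u w huw
    simp only [Prod.smul_snd, Prod.smul_fst, smul_apply, inner_smul_left,
      inner_smul_right, conj_trivial]
    rw [← mul_add, h1, mul_zero]

/-- The linear map from parameters to fields on `S`. -/
def QQlin {d : ℕ} (S : Set (Eu d)) :
    (Eu d × (Eu d →L[ℝ] Eu d) × Eu d) →ₗ[ℝ] (S → Eu d) where
  toFun p := fun x => QQ p.1 p.2.1 p.2.2 x
  map_add' := by
    intro p q
    ext1 x
    simp only [QQ, Prod.fst_add, Prod.snd_add, add_apply, inner_add_left, Pi.add_apply]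
    module
  map_smul' := by
    intro a p
    ext1 x
    simp only [QQ, Prod.smul_fst, Prod.smul_snd, smul_apply, inner_smul_left, Pi.smul_apply,
      RingHom.id_apply, conj_trivial]
    module

lemma Dinv_local {d : ℕ} (hd : 3 ≤ d) {f : Eu d → Eu d} (hf : IsConf f) (x0 e : Eu d) :
    ∃ b T c, CK T ∧ ∀ᶠ x in 𝓝 x0, Dinv f x e = QQ b T c x := by
  obtain ⟨δ, hδ, hmk⟩ := mollified_killing (by omega) hf x0 e
  set Z : Eu d → Eu d := fun y => Dinv f y e with hZ
  have hZc : Continuous Z := hf.continuous_Dinv e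
  let φ : ℕ → ContDiffBump (0 : Eu d) := fun n =>
    ⟨δ / (n + 2), δ / (n + 1), by positivity, by
      apply div_lt_div_of_pos_left hδ (by positivity) (by linarith)⟩
  have hφr : ∀ n, (φ n).rOut = δ / (n + 1) := fun n => rfl
  have hφ0 : Tendsto (fun n => (φ n).rOut) atTop (𝓝 0) := by
    simp_rw [hφr]
    have h := (tendsto_one_div_add_atTop_nhds_zero_nat (𝕜 := ℝ)).const_mul δ
    rw [mul_zero] at h
    refine h.congr fun n => ?_
    rw [mul_one_div]
  set Y : ℕ → Eu d → Eu d := fun n =>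
    ((φ n).normed volume) ⋆[ContinuousLinearMap.lsmul ℝ ℝ, volume] Z with hY
  have hlim : ∀ x, Tendsto (fun n => Y n x) atTop (𝓝 (Z x)) := fun x =>
    ContDiffBump.convolution_tendsto_right_of_continuous hφ0 hZc x
  have hYs : ∀ n, ContDiff ℝ ∞ (Y n) := fun n =>
    (φ n).hasCompactSupport_normed.contDiff_convolution_left _ ((φ n).contDiff_normed)
      hZc.locallyIntegrable
  have hYck : ∀ n, ∀ x ∈ ball x0 δ, CK (fderiv ℝ (Y n) x) := by
    intro n x hx u w huw
    refine hmk _ ((φ n).contDiff_normed (n := 1)) ?_ x hx u w huw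
    rw [(φ n).tsupport_normed_eq]
    apply closedBall_subset_closedBall
    rw [hφr]
    apply div_le_self hδ.le
    have : (0 : ℝ) ≤ n := Nat.cast_nonneg n
    linarith
  set S : Submodule ℝ (ball x0 δ → Eu d) := (KillSub d).map (QQlin (ball x0 δ)) with hS
  have hclosed : IsClosed (S : Set (ball x0 δ → Eu d)) := S.closed_of_finiteDimensional
  have hmem : (fun x : ball x0 δ => Z x) ∈ (S : Set (ball x0 δ → Eu d)) := by
    refine hclosed.mem_of_tendsto (f := fun n => fun x : ball x0 δ => Y n x) (b := atTop) ?_ ?_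
    · rw [tendsto_pi_nhds]
      exact fun x => hlim x
    · refine Eventually.of_forall fun n => ?_
      obtain ⟨b, T, c, hT, hbTc⟩ := classification hd (hYs n) hδ (hYck n)
      refine ⟨(b, T, c), hT, ?_⟩
      ext1 x
      exact (hbTc x x.2).symm
  obtain ⟨⟨b, T, c⟩, hT, hq⟩ := hmem
  refine ⟨b, T, c, hT, ?_⟩
  filter_upwards [ball_mem_nhds x0 hδ] with x hx
  exact (congrFun hq ⟨x, hx⟩).symm

lemma Dinv_global {d : ℕ} (hd : 3 ≤ d) {f : Eu d → Eu d} (hf : IsConf f) (e : Eu d) :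
    ∃ b T c, CK T ∧ ∀ x, Dinv f x e = QQ b T c x := by
  obtain ⟨b, T, c, hT, h⟩ := Dinv_local hd hf 0 e
  have hQ : ∀ (b : Eu d) T c, AnalyticOnNhd ℝ (QQ b T c) Set.univ := fun b T c =>
    contDiff_omega_iff_analyticOnNhd.1 (QQ_contDiff b T c)
  have hZ : AnalyticOnNhd ℝ (fun x => Dinv f x e) Set.univ := by
    intro x _
    obtain ⟨b', T', c', _, h'⟩ := Dinv_local hd hf x e
    exact (hQ b' T' c' x trivial).congr (EventuallyEq.symm h')
  exact ⟨b, T, c, hT, fun x => congrFun (hZ.eq_of_eventuallyEq (hQ b T c) h) x⟩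

end

section

lemma IsConf.max_principle {d : ℕ} {f : Eu d → Eu d} (hf : IsConf f) (q : Eu d) {R M : ℝ}
    (hR : 0 ≤ R) (hM : 0 ≤ M) (h : ∀ x, ‖x‖ = R → ‖f x - q‖ ≤ M) :
    ∀ x, ‖x‖ ≤ R → ‖f x - q‖ ≤ M := by
  intro x hx
  have hcont : Continuous fun x => ‖f x - q‖ ^ 2 :=
    ((hf.1.continuous.sub continuous_const).norm).pow 2
  obtain ⟨m, hm, hmax⟩ := (isCompact_closedBall (0 : Eu d) R).exists_isMaxOn
    ⟨0, mem_closedBall_self hR⟩ hcont.continuousOn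
  have hxm : ‖f x - q‖ ^ 2 ≤ ‖f m - q‖ ^ 2 := hmax (by simpa using hx)
  have hmR : ‖m‖ ≤ R := by simpa using hm
  have hxm' : ‖f x - q‖ ≤ ‖f m - q‖ :=
    (sq_le_sq₀ (norm_nonneg _) (norm_nonneg _)).1 hxm
  refine hxm'.trans ?_
  rcases hmR.lt_or_eq with hlt | heq
  · have hloc : IsLocalMax (fun x => ‖f x - q‖ ^ 2) m :=
      hmax.isLocalMax (closedBall_mem_nhds_of_mem (by simpa using hlt))
    have h0 := hloc.fderiv_eq_zero
    have hd : HasFDerivAt (fun x => f x - q) (fderiv ℝ f m) m :=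
      ((hf.1.differentiable one_ne_zero m).hasFDerivAt).sub_const q
    have h1 := hd.norm_sq.fderiv
    rw [h1] at h0
    have h2 := DFunLike.congr_fun h0 (Dinv f m (f m - q))
    simp [hf.apply_Dinv] at h2
    rw [← inner_sub_left] at h2
    rw [inner_self_eq_zero.1 h2]; simpa using hM
  · exact h m heq

lemma exists_orth {d : ℕ} (hd : 3 ≤ d) (x y : Eu d) {R : ℝ} (hR : 0 ≤ R) :
    ∃ z : Eu d, ‖z‖ = R ∧ inner ℝ x z = 0 ∧ inner ℝ y z = 0 := by
  set K : Submodule ℝ (Eu d) := Submodule.span ℝ {x, y} with hK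
  have hne : Kᗮ ≠ ⊥ := by
    intro h
    rw [Submodule.orthogonal_eq_bot_iff] at h
    have h1 : Module.finrank ℝ K ≤ 2 := by
      have h2 := finrank_span_finset_le_card (R := ℝ) ({x, y} : Finset (Eu d))
      have h3 := Finset.card_le_two (a := x) (b := y)
      simp only [Finset.coe_insert, Finset.coe_singleton] at h2
      exact h2.trans h3
    rw [h, finrank_top] at h1
    simp at h1
    omega
  obtain ⟨z, hz, hz0⟩ := Submodule.exists_mem_ne_zero_of_ne_bot hne
  have hzx : inner ℝ x z = 0 :=
    (Submodule.mem_orthogonal _ _).1 hz x (Submodule.subset_span (by simp))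
  have hzy : inner ℝ y z = 0 :=
    (Submodule.mem_orthogonal _ _).1 hz y (Submodule.subset_span (by simp))
  refine ⟨(R / ‖z‖) • z, ?_, ?_, ?_⟩
  · rw [norm_smul, Real.norm_of_nonneg (by positivity)]
    have := norm_ne_zero_iff.2 hz0
    field_simp
  · rw [inner_smul_right, hzx, mul_zero]
  · rw [inner_smul_right, hzy, mul_zero]

lemma IsConf.no_decay {d : ℕ} (hd : 3 ≤ d) {f : Eu d → Eu d} (hf : IsConf f) {C R0 : ℝ}
    (hC : 0 ≤ C) (hR0 : 0 < R0) (h : ∀ x, R0 ≤ ‖x‖ → ‖fderiv ℝ f x‖ * ‖x‖ ^ 2 ≤ C) : False := by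
  have hdiff := hf.1.differentiable one_ne_zero
  have hseg : ∀ R, 2 * R0 ≤ R → ∀ x z : Eu d, ‖x‖ = R → ‖z‖ = R → inner ℝ x z = 0 →
      ‖f x - f z‖ ≤ 4 * C / R := by
    intro R hR x z hx hz hxz
    have hRpos : 0 < R := by linarith
    have hb : ∀ p ∈ segment ℝ z x, ‖fderiv ℝ f p‖ ≤ 2 * C / R ^ 2 := by
      rintro p ⟨a, b, ha, hb, hab, rfl⟩
      have hn : ‖a • z + b • x‖ ^ 2 = (a ^ 2 + b ^ 2) * R ^ 2 := by
        rw [norm_add_sq_real, norm_smul, norm_smul, inner_smul_left, inner_smul_right,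
          real_inner_comm, hxz, hx, hz, mul_pow, mul_pow, Real.norm_eq_abs, Real.norm_eq_abs,
          sq_abs, sq_abs]
        simp; ring
      have hab2 : 1 / 2 ≤ a ^ 2 + b ^ 2 := by nlinarith [sq_nonneg (a - b)]
      have hge : R ^ 2 / 2 ≤ ‖a • z + b • x‖ ^ 2 := by rw [hn]; nlinarith [sq_nonneg R]
      have hge2 : R0 ≤ ‖a • z + b • x‖ := by
        apply (sq_le_sq₀ hR0.le (norm_nonneg _)).1
        nlinarith
      have := h _ hge2
      rw [le_div_iff₀ (by positivity)]
      have h0 := norm_nonneg (fderiv ℝ f (a • z + b • x))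
      nlinarith
    have h1 := (convex_segment z x).norm_image_sub_le_of_norm_fderiv_le (𝕜 := ℝ)
      (fun p _ => hdiff p) hb (left_mem_segment ℝ z x) (right_mem_segment ℝ z x)
    have h2 : ‖x - z‖ ≤ 2 * R := by
      refine (norm_sub_le _ _).trans ?_
      rw [hx, hz]; linarith
    calc _ ≤ 2 * C / R ^ 2 * ‖x - z‖ := h1
      _ ≤ 2 * C / R ^ 2 * (2 * R) := by gcongr
      _ = _ := by field_simp; ring
  have hosc : ∀ R, 2 * R0 ≤ R → ∀ x y : Eu d, ‖x‖ ≤ R → ‖y‖ ≤ R → ‖f x - f y‖ ≤ 16 * C / R := by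
    intro R hR
    have hRpos : 0 < R := by linarith
    obtain ⟨p, hp, -, -⟩ := exists_orth hd 0 0 hRpos.le
    have hs : ∀ x, ‖x‖ = R → ‖f x - f p‖ ≤ 8 * C / R := by
      intro x hx
      obtain ⟨z, hz, hxz, hpz⟩ := exists_orth hd x p hRpos.le
      have h1 := hseg R hR x z hx hz hxz
      have h2 := hseg R hR p z hp hz hpz
      rw [norm_sub_rev] at h2
      calc ‖f x - f p‖ ≤ ‖f x - f z‖ + ‖f z - f p‖ := norm_sub_le_norm_sub_add_norm_sub _ _ _
        _ ≤ 4 * C / R + 4 * C / R := add_le_add h1 h2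
        _ = _ := by ring
    have hb := hf.max_principle (f p) hRpos.le (by positivity) hs
    intro x y hx hy
    have h1 := hb x hx
    have h2 := hb y hy
    rw [norm_sub_rev] at h2
    calc ‖f x - f y‖ ≤ ‖f x - f p‖ + ‖f p - f y‖ := norm_sub_le_norm_sub_add_norm_sub _ _ _
      _ ≤ 8 * C / R + 8 * C / R := add_le_add h1 h2
      _ = _ := by ring
  have hconst : ∀ x y, f x = f y := by
    intro x y
    have ht : Tendsto (fun R : ℝ => 16 * C / R) atTop (𝓝 0) :=
      tendsto_const_nhds.div_atTop tendsto_id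
    have : ‖f x - f y‖ ≤ 0 := by
      refine ge_of_tendsto ht ?_
      filter_upwards [eventually_ge_atTop (2 * R0), eventually_ge_atTop ‖x‖,
        eventually_ge_atTop ‖y‖] with R h1 h2 h3
      exact hosc R h1 x y h2 h3
    exact sub_eq_zero.1 (norm_le_zero_iff.1 this)
  have hfc : f = fun _ => f 0 := by ext1 x; exact hconst x 0
  have h1 := (hf.2 0).1
  rw [hfc] at h1
  simp at h1

lemma rigid_three {d : ℕ} (hd : 3 ≤ d) {f : Eu d → Eu d} (hf : IsConf f) (x : Eu d) :
    fderiv ℝ f x = fderiv ℝ f 0 := by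
  choose b T c hT hQ using fun e => Dinv_global hd hf e
  have hc0 : ∀ e, c e = 0 := by
    intro e
    by_contra hne
    have hcpos : 0 < ‖c e‖ := norm_pos_iff.2 hne
    set R0 : ℝ := 1 + 2 * (‖b e‖ + ‖T e‖) / ‖c e‖ with hR0
    have hR0pos : 1 ≤ R0 := by
      have : 0 ≤ 2 * (‖b e‖ + ‖T e‖) / ‖c e‖ := by positivity
      linarith
    refine hf.no_decay hd (C := 2 * ‖e‖ / ‖c e‖) (R0 := R0) (by positivity) (by linarith) ?_
    intro x hx
    have h1 := hf.norm_Dinv x e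
    have hq : ‖(2 * inner ℝ (c e) x) • x - (inner ℝ x x : ℝ) • c e‖ = ‖c e‖ * ‖x‖ ^ 2 := by
      rw [← sq_eq_sq₀ (norm_nonneg _) (by positivity), norm_sub_sq_real, norm_smul, norm_smul,
        inner_smul_left, inner_smul_right, real_inner_comm, real_inner_self_eq_norm_sq,
        mul_pow, mul_pow, Real.norm_eq_abs, Real.norm_eq_abs, sq_abs, sq_abs]
      simp; ring
    have hlow : ‖c e‖ * ‖x‖ ^ 2 / 2 ≤ ‖Dinv f x e‖ := by
      have e1 : (2 * inner ℝ (c e) x) • x - (inner ℝ x x : ℝ) • c e =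
          Dinv f x e - (b e + T e x) := by rw [hQ, QQ]; abel
      rw [e1] at hq
      have e2 : ‖Dinv f x e - (b e + T e x)‖ ≤ ‖Dinv f x e‖ + (‖b e‖ + ‖T e‖ * ‖x‖) :=
        (norm_sub_le _ _).trans (add_le_add le_rfl ((norm_add_le _ _).trans
          (add_le_add le_rfl ((T e).le_opNorm x))))
      have hx1 : 1 ≤ ‖x‖ := hR0pos.trans hx
      have e3 : 2 * (‖b e‖ + ‖T e‖) ≤ ‖c e‖ * ‖x‖ := by
        have : 2 * (‖b e‖ + ‖T e‖) / ‖c e‖ ≤ ‖x‖ := by linarith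
        rw [div_le_iff₀ hcpos] at this
        linarith
      have hb0 := norm_nonneg (b e)
      have e4 : 2 * (‖b e‖ + ‖T e‖ * ‖x‖) ≤ ‖c e‖ * ‖x‖ ^ 2 := by nlinarith
      linarith
    have hl0 := norm_nonneg (fderiv ℝ f x)
    rw [le_div_iff₀ hcpos]
    nlinarith
  have hZ : ∀ e x, Dinv f x e = b e + T e x := by
    intro e x
    rw [hQ, hc0, QQ]; simp
  have hZ0 : ∀ e, Dinv f 0 e = b e := by intro e; rw [hZ]; simp
  have hM : ∀ e x, T e x = (Dinv f x - Dinv f 0) e := by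
    intro e x; rw [sub_apply, hZ, hZ0]; simp
  have hskew : ∀ e x, e ≠ 0 → inner ℝ (T e x) x = 0 := by
    intro e x he
    let i0 : Fin d := ⟨0, by omega⟩
    have h1 := (hT e).symm_eq i0
    set μ := inner ℝ (T e (bv i0)) (bv i0) with hμ
    have h2 : ∀ u, inner ℝ (T e u) u = μ * inner ℝ u u := by
      intro u
      have := h1 u u
      rw [real_inner_comm (T e u) u] at this
      linarith
    by_cases hμ0 : μ = 0
    · rw [h2, hμ0, zero_mul]
    · exfalso
      have hinj : Function.Injective (T e : Eu d →ₗ[ℝ] Eu d) := by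
        rw [← LinearMap.ker_eq_bot, LinearMap.ker_eq_bot']
        intro u hu
        have hu' : T e u = 0 := hu
        have h3 := h2 u
        rw [hu', inner_zero_left] at h3
        rcases mul_eq_zero.1 h3.symm with h | h
        · exact absurd h hμ0
        · exact inner_self_eq_zero.1 h
      obtain ⟨y, hy⟩ := LinearMap.surjective_of_injective hinj (-(b e))
      have hy' : T e y = -(b e) := hy
      have h3 := hf.norm_Dinv y e
      rw [hZ, hy', add_neg_cancel, norm_zero, mul_zero] at h3
      exact he (norm_eq_zero.1 h3.symm)
  have hT0 : ∀ e x, T e x = 0 := by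
    intro e0 x
    by_contra hne
    have hinj : Function.Injective ((Dinv f x - Dinv f 0 : Eu d →L[ℝ] Eu d) : Eu d →ₗ[ℝ] Eu d) := by
      rw [← LinearMap.ker_eq_bot, LinearMap.ker_eq_bot']
      intro e he
      have he' : T e x = 0 := by rw [hM]; exact he
      by_contra he0
      have h1 : ∀ s : ℝ, ‖fderiv ℝ f (s • x)‖ * ‖b e‖ = ‖e‖ := by
        intro s
        have := hf.norm_Dinv (s • x) e
        rwa [hZ, map_smul, he', smul_zero, add_zero] at this
      have hepos : 0 < ‖e‖ := norm_pos_iff.2 he0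
      have hbpos : 0 < ‖b e‖ := by
        rcases (norm_nonneg (b e)).lt_or_eq with h | h
        · exact h
        · have := h1 0; rw [← h, mul_zero] at this; linarith
      have h2 : ∀ s : ℝ, ‖b e0 + s • T e0 x‖ * ‖e‖ = ‖e0‖ * ‖b e‖ := by
        intro s
        have := hf.norm_Dinv (s • x) e0
        rw [hZ, map_smul] at this
        rw [← h1 s, ← this]; ring
      have hTpos : 0 < ‖T e0 x‖ := norm_pos_iff.2 hne
      have h3 : ∀ s : ℝ, 0 ≤ s → s * (‖T e0 x‖ * ‖e‖) ≤ ‖e0‖ * ‖b e‖ + ‖b e0‖ * ‖e‖ := by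
        intro s hs
        have h4 : ‖s • T e0 x‖ ≤ ‖b e0 + s • T e0 x‖ + ‖b e0‖ := by
          have := norm_sub_le (b e0 + s • T e0 x) (b e0)
          rwa [add_sub_cancel_left] at this
        rw [norm_smul, Real.norm_of_nonneg hs] at h4
        rw [← h2 s]
        nlinarith
      set B := ‖e0‖ * ‖b e‖ + ‖b e0‖ * ‖e‖ with hB
      have hB0 : 0 ≤ B := by positivity
      have hP : 0 < ‖T e0 x‖ * ‖e‖ := by positivity
      have := h3 ((B + 1) / (‖T e0 x‖ * ‖e‖)) (by positivity)
      rw [div_mul_cancel₀ _ hP.ne'] at this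
      linarith
    obtain ⟨e, he⟩ := LinearMap.surjective_of_injective hinj x
    have he' : T e x = x := by rw [hM]; exact he
    have hx0 : x ≠ 0 := by
      rintro rfl
      exact hne (by simp)
    have he0 : e ≠ 0 := by
      rintro rfl
      apply hx0
      rw [← he', hM, map_zero]
    have := hskew e x he0
    rw [he'] at this
    exact hx0 (inner_self_eq_zero.1 this)
  ext1 v
  have h1 : Dinv f x (fderiv ℝ f 0 v) = v := by
    rw [hZ, hT0, add_zero, ← hZ0, hf.Dinv_apply]
  have h2 := hf.apply_Dinv x (fderiv ℝ f 0 v)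
  rwa [h1] at h2

lemma similarity_of_const {d : ℕ} {f : Eu d → Eu d} (hf : IsConf f)
    (h : ∀ x, fderiv ℝ f x = fderiv ℝ f 0) :
    ∃ r > 0, ∀ x y, ‖f x - f y‖ = r * ‖x - y‖ := by
  refine ⟨‖fderiv ℝ f 0‖, (hf.2 0).1, fun x y => ?_⟩
  set L := fderiv ℝ f 0 with hL
  have hdiff : ∀ x, HasFDerivAt (fun x => f x - L x) (fderiv ℝ f x - L) x := fun x =>
    (hf.1.differentiable one_ne_zero x).hasFDerivAt.sub L.hasFDerivAt
  have hc := is_const_of_fderiv_eq_zero (𝕜 := ℝ) (f := fun x => f x - L x)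
    (fun x => (hdiff x).differentiableAt) (fun x => by rw [(hdiff x).fderiv, h x, sub_self]) x y
  have e : f x - f y = L (x - y) := by
    rw [map_sub]
    have hc' : f x - L x = f y - L y := hc
    have : f x = f y - L y + L x := by rw [← hc']; abel
    rw [this]; abel
  rw [e, (hf.2 0).2]

end

section

lemma holo_case {F : ℂ → ℂ} (hF : ContDiff ℝ 1 F) {B : ℝ}
    (hl : ∀ z, ∃ l > 0, l ≤ B ∧ ∀ v, ‖fderiv ℝ F z v‖ = l * ‖v‖)
    (hI : ∀ z, fderiv ℝ F z Complex.I = Complex.I * fderiv ℝ F z 1) :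
    ∃ r > 0, ∀ x y, ‖F x - F y‖ = r * ‖x - y‖ := by
  have hlin : ∀ z v, fderiv ℝ F z v = v * fderiv ℝ F z 1 := by
    intro z v
    have hv : v = v.re • (1 : ℂ) + v.im • Complex.I := by
      simp [Complex.re_add_im]
    conv_lhs => rw [hv, map_add, map_smul, map_smul, hI]
    conv_rhs => rw [hv]
    simp only [Complex.real_smul]; ring
  have hd : ∀ z, HasDerivAt F (fderiv ℝ F z 1) z := by
    intro z
    have h1 := (hF.differentiable one_ne_zero z).hasFDerivAt
    have h2 : HasFDerivAt F (ContinuousLinearMap.toSpanSingleton ℂ (fderiv ℝ F z 1)) z := by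
      refine hasFDerivAt_of_restrictScalars ℝ h1 ?_
      ext1 v
      simp
      exact (hlin z v).symm
    exact hasDerivAt_iff_hasFDerivAt.2 h2
  have hdiff : Differentiable ℂ F := fun z => (hd z).differentiableAt
  have hderiv : deriv F = fun z => fderiv ℝ F z 1 := by ext1 z; exact (hd z).deriv
  have hdd : Differentiable ℂ (deriv F) := by
    exact hdiff.deriv
  have hb : Bornology.IsBounded (Set.range (deriv F)) := by
    rw [isBounded_iff_forall_norm_le]
    refine ⟨B, ?_⟩
    rintro _ ⟨z, rfl⟩
    obtain ⟨l, _, hlB, hv⟩ := hl z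
    rw [hderiv]
    show ‖fderiv ℝ F z 1‖ ≤ B
    rw [hv]; simpa using hlB
  have hc : ∀ z, deriv F z = deriv F 0 := fun z => hdd.apply_eq_apply_of_bounded hb z 0
  obtain ⟨l, hlpos, _, hv⟩ := hl 0
  refine ⟨l, hlpos, fun x y => ?_⟩
  set a := deriv F 0 with ha
  have hna : ‖a‖ = l := by
    rw [ha, hderiv]
    show ‖fderiv ℝ F 0 1‖ = l
    rw [hv]; simp
  have hG : ∀ z, HasDerivAt (fun z => F z - a * z) (deriv F z - a * 1) z := fun z =>
    (hdiff z).hasDerivAt.sub ((hasDerivAt_id z).const_mul a)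
  have hconst := is_const_of_deriv_eq_zero (f := fun z => F z - a * z)
    (fun z => (hG z).differentiableAt) (fun z => by rw [(hG z).deriv, hc]; ring) x y
  have hconst' : F x - a * x = F y - a * y := hconst
  have : F x - F y = a * (x - y) := by linear_combination hconst'
  rw [this, norm_mul, hna]

lemma complex_dichotomy {L : ℂ →L[ℝ] ℂ} {l : ℝ} (hl : 0 < l) (h : ∀ v, ‖L v‖ = l * ‖v‖) :
    L Complex.I = Complex.I * L 1 ∨ L Complex.I = -(Complex.I * L 1) := by
  have h1 := h 1
  have h2 := h Complex.I
  have h3 := h (1 + Complex.I)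
  rw [map_add] at h3
  set a := L 1
  set b := L Complex.I
  have hsq : ∀ z : ℂ, ‖z‖ ^ 2 = z.re ^ 2 + z.im ^ 2 := by
    intro z; rw [← Complex.normSq_eq_norm_sq, Complex.normSq_apply]; ring
  have e1 : a.re ^ 2 + a.im ^ 2 = l ^ 2 := by rw [← hsq, h1]; simp
  have e2 : b.re ^ 2 + b.im ^ 2 = l ^ 2 := by rw [← hsq, h2]; simp
  have e3 : (a.re + b.re) ^ 2 + (a.im + b.im) ^ 2 = 2 * l ^ 2 := by
    have : ‖(1 : ℂ) + Complex.I‖ ^ 2 = 2 := by rw [hsq]; simp; norm_num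
    rw [← Complex.add_re, ← Complex.add_im, ← hsq, h3, mul_pow, this]; ring
  have e4 : a.re * b.re + a.im * b.im = 0 := by linarith
  set D := a.re * b.im - a.im * b.re with hD
  have hDD : D ^ 2 = (l ^ 2) ^ 2 := by
    have : D ^ 2 + (a.re * b.re + a.im * b.im) ^ 2 =
      (a.re ^ 2 + a.im ^ 2) * (b.re ^ 2 + b.im ^ 2) := by rw [hD]; ring
    rw [e4, e1, e2] at this
    linarith
  have r1 : b.re * l ^ 2 = - a.im * D := by rw [← e1, hD]; linear_combination a.re * e4
  have r2 : b.im * l ^ 2 = a.re * D := by rw [← e1, hD]; linear_combination a.im * e4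
  have hl2 : l ^ 2 ≠ 0 := by positivity
  rcases sq_eq_sq_iff_eq_or_eq_neg.1 hDD with h | h
  · left
    rw [h] at r1 r2
    apply Complex.ext
    · simp; exact mul_right_cancel₀ hl2 r1
    · simp; exact mul_right_cancel₀ hl2 r2
  · right
    rw [h] at r1 r2
    apply Complex.ext
    · simp; exact mul_right_cancel₀ hl2 (by linarith)
    · simp; exact mul_right_cancel₀ hl2 (by linarith)

lemma complex_rigid {F : ℂ → ℂ} (hF : ContDiff ℝ 1 F) {B : ℝ}
    (hl : ∀ z, ∃ l > 0, l ≤ B ∧ ∀ v, ‖fderiv ℝ F z v‖ = l * ‖v‖) :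
    ∃ r > 0, ∀ x y, ‖F x - F y‖ = r * ‖x - y‖ := by
  have hcont : ∀ v, Continuous fun z => fderiv ℝ F z v := fun v =>
    (hF.continuous_fderiv one_ne_zero).clm_apply continuous_const
  set S : Set ℂ := {z | fderiv ℝ F z Complex.I = Complex.I * fderiv ℝ F z 1} with hS
  set S' : Set ℂ := {z | fderiv ℝ F z Complex.I = -(Complex.I * fderiv ℝ F z 1)} with hS'
  have c1 : IsClosed S := isClosed_eq (hcont _) (continuous_const.mul (hcont _))
  have c2 : IsClosed S' := isClosed_eq (hcont _) (continuous_const.mul (hcont _)).neg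
  have hcompl : S = S'ᶜ := by
    ext z
    obtain ⟨l, hlpos, _, hv⟩ := hl z
    constructor
    · intro h1 h2
      have h1' : fderiv ℝ F z Complex.I = Complex.I * fderiv ℝ F z 1 := h1
      have h2' : fderiv ℝ F z Complex.I = -(Complex.I * fderiv ℝ F z 1) := h2
      have h0 : fderiv ℝ F z Complex.I = 0 := by
        have : (2 : ℂ) * fderiv ℝ F z Complex.I = 0 := by linear_combination h1' + h2'
        simpa using this
      have := hv Complex.I
      rw [h0] at this
      simp at this
      linarith
    · intro h2
      exact (complex_dichotomy hlpos hv).resolve_right h2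
  have hclopen : IsClopen S := ⟨c1, by rw [hcompl]; exact c2.isOpen_compl⟩
  rcases isClopen_iff.1 hclopen with h | h
  · have hall : ∀ z, fderiv ℝ F z Complex.I = -(Complex.I * fderiv ℝ F z 1) := by
      intro z
      obtain ⟨l, hlpos, _, hv⟩ := hl z
      refine (complex_dichotomy hlpos hv).resolve_left fun h1 => ?_
      have : z ∈ S := h1
      rw [h] at this; exact this
    set G : ℂ → ℂ := fun z => Complex.conjCLE (F z) with hG
    have hGd : ∀ z, fderiv ℝ G z = (Complex.conjCLE : ℂ →L[ℝ] ℂ).comp (fderiv ℝ F z) := fun z =>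
      ((Complex.conjCLE : ℂ →L[ℝ] ℂ).hasFDerivAt.comp z
        (hF.differentiable one_ne_zero z).hasFDerivAt).fderiv
    obtain ⟨r, hr, h⟩ := holo_case (F := G) (B := B) (Complex.conjCLE.contDiff.comp hF) (by
      intro z
      obtain ⟨l, hlpos, hlB, hv⟩ := hl z
      refine ⟨l, hlpos, hlB, fun v => ?_⟩
      rw [hGd, ← hv]
      simp) (by
      intro z
      rw [hGd]
      simp [hall])
    refine ⟨r, hr, fun x y => ?_⟩
    rw [← h, hG]
    simp only [Complex.conjCLE_apply]
    rw [← map_sub, Complex.norm_conj]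
  · exact holo_case hF hl fun z => by
      have : z ∈ S := by rw [h]; trivial
      exact this

lemma rigid_two {f : Eu 2 → Eu 2} (hf : IsConf f) {B : ℝ} (hB : ∀ x, ‖fderiv ℝ f x‖ ≤ B) :
    ∃ r > 0, ∀ x y, ‖f x - f y‖ = r * ‖x - y‖ := by
  let ι : ℂ ≃ₗᵢ[ℝ] Eu 2 := Complex.orthonormalBasisOneI.repr
  set F : ℂ → ℂ := fun z => ι.symm (f (ι z)) with hF
  have hFd : ∀ z v, fderiv ℝ F z v = ι.symm (fderiv ℝ f (ι z) (ι v)) := by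
    intro z v
    have h1 : HasFDerivAt F (((ι.symm.toContinuousLinearEquiv : Eu 2 →L[ℝ] ℂ)).comp
        ((fderiv ℝ f (ι z)).comp (ι.toContinuousLinearEquiv : ℂ →L[ℝ] Eu 2))) z :=
      (ι.symm.toContinuousLinearEquiv : Eu 2 →L[ℝ] ℂ).hasFDerivAt.comp z
        ((hf.1.differentiable one_ne_zero (ι z)).hasFDerivAt.comp z
          (ι.toContinuousLinearEquiv : ℂ →L[ℝ] Eu 2).hasFDerivAt)
    rw [h1.fderiv]; rfl
  obtain ⟨r, hr, h⟩ := complex_rigid (F := F) (B := B)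
    (ι.symm.contDiff.comp (hf.1.comp ι.contDiff)) (by
      intro z
      refine ⟨‖fderiv ℝ f (ι z)‖, (hf.2 _).1, hB _, fun v => ?_⟩
      rw [hFd, LinearIsometryEquiv.norm_map, (hf.2 _).2, LinearIsometryEquiv.norm_map])
  refine ⟨r, hr, fun x y => ?_⟩
  have := h (ι.symm x) (ι.symm y)
  simp only [hF] at this
  rw [← map_sub, ← map_sub, LinearIsometryEquiv.norm_map, LinearIsometryEquiv.norm_map,
    ι.apply_symm_apply, ι.apply_symm_apply] at this
  exact this

end

section

lemma norm_eu_one (x : Eu 1) : ‖x‖ = |x 0| := by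
  rw [EuclideanSpace.norm_eq]
  simp [Real.sqrt_sq_eq_abs]

/-- Mean value theorem on the line, in terms of norms. -/
lemma mvt_one {f : Eu 1 → Eu 1} (hf : IsConf f) (p q : Eu 1) :
    ∃ ξ ∈ segment ℝ p q, ‖f q - f p‖ = ‖fderiv ℝ f ξ‖ * ‖q - p‖ := by
  set γ : ℝ → Eu 1 := fun t => p + t • (q - p) with hγ
  have hγd : ∀ t, HasDerivAt γ (q - p) t := fun t => by
    have := ((hasDerivAt_id t).smul_const (q - p)).const_add p
    simpa [hγ] using this
  have hg : ∀ t, HasDerivAt (fun t => (f (γ t)) 0) ((fderiv ℝ f (γ t) (q - p)) 0) t := fun t => by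
    have h1 := (hf.1.differentiable one_ne_zero (γ t)).hasFDerivAt.comp_hasDerivAt t (hγd t)
    exact (EuclideanSpace.proj (0 : Fin 1) : Eu 1 →L[ℝ] ℝ).hasFDerivAt.comp_hasDerivAt t h1
  obtain ⟨t, ht, h⟩ := exists_hasDerivAt_eq_slope (fun t => (f (γ t)) 0)
    (fun t => (fderiv ℝ f (γ t) (q - p)) 0) (zero_lt_one' ℝ)
    (fun t _ => (hg t).continuousAt.continuousWithinAt) (fun t _ => hg t)
  refine ⟨γ t, ?_, ?_⟩
  · rw [segment_eq_image']
    exact ⟨t, ⟨ht.1.le, ht.2.le⟩, rfl⟩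
  · rw [← (hf.2 _).2, norm_eu_one, norm_eu_one (fderiv ℝ f (γ t) (q - p)), h]
    simp [hγ]

lemma listMap_mem {d : ℕ} {A : Type*} {φ : A → Eu d → Eu d} {X : Set (Eu d)}
    (hX : ∀ a, ∀ x ∈ X, φ a x ∈ X) (w : List A) : ∀ x ∈ X, listMap φ w x ∈ X := by
  induction w with
  | nil => intro x hx; exact hx
  | cons a w ih => intro x hx; exact hX a _ (ih x hx)

lemma listMap_contr {d : ℕ} {A : Type*} {φ : A → Eu d → Eu d} {r : ℝ} (hr : 0 ≤ r)
    (h : ∀ a x y, ‖φ a x - φ a y‖ ≤ r * ‖x - y‖) (w : List A) :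
    ∀ x y, ‖listMap φ w x - listMap φ w y‖ ≤ r ^ w.length * ‖x - y‖ := by
  induction w with
  | nil => intro x y; simp [listMap]
  | cons a w ih =>
    intro x y
    calc ‖listMap φ (a :: w) x - listMap φ (a :: w) y‖
        ≤ r * ‖listMap φ w x - listMap φ w y‖ := h a _ _
      _ ≤ r * (r ^ w.length * ‖x - y‖) := by gcongr; exact ih x y
      _ = _ := by rw [List.length_cons, pow_succ]; ring

lemma bd_one {A : Type*} [Fintype A] [Nonempty A] {φ : A → Eu 1 → Eu 1}
    (hconf : ∀ a, IsConf (φ a)) {r : ℝ} (hr0 : 0 < r) (hr1 : r < 1)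
    (hcontr : ∀ a x y, ‖φ a x - φ a y‖ ≤ r * ‖x - y‖)
    {H α : ℝ} (hH : 0 < H) (hα : 0 < α)
    (hhol : ∀ a x y, |‖fderiv ℝ (φ a) x‖ - ‖fderiv ℝ (φ a) y‖| ≤ H * ‖x - y‖ ^ α)
    {X : Set (Eu 1)} (hXc : IsCompact X) (hX : ∀ a, ∀ x ∈ X, φ a x ∈ X) :
    ∃ K ≥ 1, ∀ w, ∀ x ∈ X, ∀ y ∈ X, ∀ x' ∈ X, ∀ y' ∈ X,
      ‖listMap φ w y - listMap φ w x‖ * ‖y' - x'‖ ≤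
        K * (‖listMap φ w y' - listMap φ w x'‖ * ‖y - x‖) := by
  obtain ⟨R, hR⟩ := hXc.isBounded.subset_closedBall (0 : Eu 1)
  set D := Metric.diam X with hD
  have hD0 : 0 ≤ D := Metric.diam_nonneg
  have hm : ∃ m > 0, ∀ a, ∀ x ∈ closedBall (0 : Eu 1) R, m ≤ ‖fderiv ℝ (φ a) x‖ := by
    have : ∀ a, ∃ m > 0, ∀ x ∈ closedBall (0 : Eu 1) R, m ≤ ‖fderiv ℝ (φ a) x‖ := by
      intro a
      rcases (closedBall (0 : Eu 1) R).eq_empty_or_nonempty with he | hne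
      · exact ⟨1, one_pos, by simp [he]⟩
      · obtain ⟨z, _, hz⟩ := (isCompact_closedBall (0 : Eu 1) R).exists_isMinOn hne
          ((hconf a).1.continuous_fderiv one_ne_zero).norm.continuousOn
        exact ⟨_, ((hconf a).2 z).1, fun x hx => hz hx⟩
    choose m hm0 hm using this
    obtain ⟨a₀, ha₀⟩ := Finite.exists_min m
    exact ⟨m a₀, hm0 a₀, fun a x hx => (ha₀ a).trans (hm a x hx)⟩
  obtain ⟨m, hm0, hm⟩ := hm
  set C := H * (2 * D) ^ α / m with hC
  have hC0 : 0 ≤ C := by positivity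
  set s := r ^ α with hs
  have hs0 : 0 ≤ s := by positivity
  have hs1 : s < 1 := Real.rpow_lt_one hr0.le hr1 hα
  have key : ∀ w, ∀ x ∈ X, ∀ y ∈ X, ∀ x' ∈ X, ∀ y' ∈ X,
      ‖listMap φ w y - listMap φ w x‖ * ‖y' - x'‖ ≤
        Real.exp (∑ k ∈ Finset.range w.length, C * s ^ k) *
          (‖listMap φ w y' - listMap φ w x'‖ * ‖y - x‖) := by
    intro w
    induction w with
    | nil => intro x _ y _ x' _ y' _; simp [listMap, mul_comm]
    | cons a w ih =>
      intro x hx y hy x' hx' y' hy'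
      set g := listMap φ w with hg
      have hgX := listMap_mem hX w
      obtain ⟨ξ, hξ, e⟩ := mvt_one (hconf a) (g x) (g y)
      obtain ⟨ξ', hξ', e'⟩ := mvt_one (hconf a) (g x') (g y')
      have hball : ∀ z ∈ X, g z ∈ closedBall (g x) (r ^ w.length * D) := by
        intro z hz
        rw [mem_closedBall, dist_eq_norm]
        refine (listMap_contr hr0.le hcontr w z x).trans ?_
        rw [← dist_eq_norm]
        gcongr
        exact Metric.dist_le_diam_of_mem hXc.isBounded hz hx
      have b1 := (convex_closedBall _ _).segment_subset (hball x hx) (hball y hy) hξ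
      have b2 := (convex_closedBall _ _).segment_subset (hball x' hx') (hball y' hy') hξ'
      have b3 := hm a _ ((convex_closedBall _ _).segment_subset (hR (hgX x' hx'))
        (hR (hgX y' hy')) hξ')
      have b4 : ‖ξ - ξ'‖ ≤ r ^ w.length * (2 * D) := by
        rw [← dist_eq_norm]
        rw [mem_closedBall] at b1 b2
        linarith [dist_triangle_right ξ ξ' (g x)]
      have b5 : ‖ξ - ξ'‖ ^ α ≤ s ^ w.length * (2 * D) ^ α := by
        calc ‖ξ - ξ'‖ ^ α ≤ (r ^ w.length * (2 * D)) ^ α := by gcongr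
          _ = _ := by
            rw [Real.mul_rpow (by positivity) (by positivity), hs, ← Real.rpow_natCast,
              ← Real.rpow_natCast, ← Real.rpow_mul hr0.le, ← Real.rpow_mul hr0.le, mul_comm α]
      have b6 : ‖fderiv ℝ (φ a) ξ‖ ≤ Real.exp (C * s ^ w.length) * ‖fderiv ℝ (φ a) ξ'‖ := by
        have h1 := (abs_le.1 (hhol a ξ ξ')).2
        have h2 : H * ‖ξ - ξ'‖ ^ α ≤ C * s ^ w.length * m := by
          calc H * ‖ξ - ξ'‖ ^ α ≤ H * (s ^ w.length * (2 * D) ^ α) := by gcongr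
            _ = _ := by rw [hC]; field_simp
        have h3 : C * s ^ w.length * m ≤ C * s ^ w.length * ‖fderiv ℝ (φ a) ξ'‖ := by gcongr
        calc ‖fderiv ℝ (φ a) ξ‖ ≤ (C * s ^ w.length + 1) * ‖fderiv ℝ (φ a) ξ'‖ := by linarith
          _ ≤ _ := by gcongr; exact Real.add_one_le_exp _
      show ‖φ a (g y) - φ a (g x)‖ * ‖y' - x'‖ ≤ _ * (‖φ a (g y') - φ a (g x')‖ * ‖y - x‖)
      rw [e, e', List.length_cons, Finset.sum_range_succ, Real.exp_add]
      calc ‖fderiv ℝ (φ a) ξ‖ * ‖g y - g x‖ * ‖y' - x'‖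
          = ‖fderiv ℝ (φ a) ξ‖ * (‖g y - g x‖ * ‖y' - x'‖) := by ring
        _ ≤ (Real.exp (C * s ^ w.length) * ‖fderiv ℝ (φ a) ξ'‖) *
            (Real.exp (∑ k ∈ Finset.range w.length, C * s ^ k) *
              (‖g y' - g x'‖ * ‖y - x‖)) := by
            exact mul_le_mul b6 (ih x hx y hy x' hx' y' hy') (by positivity) (by positivity)
        _ = _ := by ring
  refine ⟨Real.exp (∑' k, C * s ^ k), Real.one_le_exp (tsum_nonneg fun k => by positivity), ?_⟩
  intro w x hx y hy x' hx' y' hy'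
  refine (key w x hx y hy x' hx' y' hy').trans ?_
  gcongr
  exact ((summable_geometric_of_lt_one hs0 hs1).mul_left C).sum_le_tsum _
    fun k _ => by positivity

/-- Bounded distortion along words. -/
def BDist {d : ℕ} {A : Type*} (φ : A → Eu d → Eu d) (X : Set (Eu d)) : Prop :=
  ∃ K ≥ 1, ∀ w : List A, ∃ l > 0, ∀ x ∈ X, ∀ y ∈ X,
    l * ‖x - y‖ ≤ ‖listMap φ w x - listMap φ w y‖ ∧
      ‖listMap φ w x - listMap φ w y‖ ≤ K * l * ‖x - y‖

lemma bdist_of_similar {d : ℕ} {A : Type*} {φ : A → Eu d → Eu d} (X : Set (Eu d))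
    (h : ∀ a, ∃ r > 0, ∀ x y, ‖φ a x - φ a y‖ = r * ‖x - y‖) : BDist φ X := by
  have : ∀ w : List A, ∃ l > 0, ∀ x y, ‖listMap φ w x - listMap φ w y‖ = l * ‖x - y‖ := by
    intro w
    induction w with
    | nil => exact ⟨1, one_pos, fun x y => by simp [listMap]⟩
    | cons a w ih =>
      obtain ⟨l, hl, h1⟩ := ih
      obtain ⟨r, hr, h2⟩ := h a
      refine ⟨r * l, by positivity, fun x y => ?_⟩
      show ‖φ a _ - φ a _‖ = _
      rw [h2, h1]; ring
  refine ⟨1, le_rfl, fun w => ?_⟩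
  obtain ⟨l, hl, h1⟩ := this w
  exact ⟨l, hl, fun x _ y _ => by rw [h1]; simp⟩

lemma bdist_of_subsingleton {d : ℕ} {A : Type*} (φ : A → Eu d → Eu d) {X : Set (Eu d)}
    (h : X.Subsingleton) : BDist φ X :=
  ⟨1, le_rfl, fun w => ⟨1, one_pos, fun x hx y hy => by rw [h hx hy]; simp⟩⟩

lemma bdist_one {A : Type*} [Fintype A] [Nonempty A] {φ : A → Eu 1 → Eu 1}
    (hconf : ∀ a, IsConf (φ a)) {r : ℝ} (hr0 : 0 < r) (hr1 : r < 1)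
    (hcontr : ∀ a x y, ‖φ a x - φ a y‖ ≤ r * ‖x - y‖)
    {H α : ℝ} (hH : 0 < H) (hα : 0 < α)
    (hhol : ∀ a x y, |‖fderiv ℝ (φ a) x‖ - ‖fderiv ℝ (φ a) y‖| ≤ H * ‖x - y‖ ^ α)
    {X : Set (Eu 1)} (hXc : IsCompact X) (hX : ∀ a, ∀ x ∈ X, φ a x ∈ X) : BDist φ X := by
  rcases X.subsingleton_or_nontrivial with hs | ⟨x₀, hx₀, y₀, hy₀, hne⟩
  · exact bdist_of_subsingleton φ hs
  obtain ⟨K, hK, h⟩ := bd_one hconf hr0 hr1 hcontr hH hα hhol hXc hX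
  have hK0 : 0 < K := by linarith
  have hinj : ∀ a, Function.Injective (φ a) := by
    intro a p q hpq
    obtain ⟨ξ, _, e⟩ := mvt_one (hconf a) p q
    rw [hpq, sub_self, norm_zero] at e
    have := (mul_eq_zero.1 e.symm).resolve_left ((hconf a).2 ξ).1.ne'
    exact (sub_eq_zero.1 (norm_eq_zero.1 this)).symm
  have hinjw : ∀ w : List A, Function.Injective (listMap φ w) := by
    intro w
    induction w with
    | nil => exact Function.injective_id
    | cons a w ih => exact (hinj a).comp ih
  have hn : 0 < ‖x₀ - y₀‖ := norm_pos_iff.2 (sub_ne_zero.2 hne)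
  refine ⟨K ^ 2, one_le_pow₀ hK, fun w => ?_⟩
  have hp : 0 < ‖listMap φ w x₀ - listMap φ w y₀‖ :=
    norm_pos_iff.2 (sub_ne_zero.2 fun e => hne (hinjw w e))
  refine ⟨‖listMap φ w x₀ - listMap φ w y₀‖ / (‖x₀ - y₀‖ * K), by positivity, ?_⟩
  intro x hx y hy
  have h1 := h w y hy x hx y₀ hy₀ x₀ hx₀
  have h2 := h w y₀ hy₀ x₀ hx₀ y hy x hx
  constructor
  · rw [div_mul_eq_mul_div, div_le_iff₀ (by positivity)]
    linarith
  · have : K ^ 2 * (‖listMap φ w x₀ - listMap φ w y₀‖ / (‖x₀ - y₀‖ * K)) * ‖x - y‖ =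
      (K * (‖listMap φ w x₀ - listMap φ w y₀‖ * ‖x - y‖)) / ‖x₀ - y₀‖ := by field_simp
    rw [this, le_div_iff₀ hn]
    exact h1

end

lemma bdist_main {d : ℕ} {A : Type*} [Fintype A] {φ : A → Eu d → Eu d}
    (hΦ : IsSelfConformalIFS φ) {X : Set (Eu d)} (hXc : IsCompact X)
    (hX : ∀ a, ∀ x ∈ X, φ a x ∈ X) : BDist φ X := by
  obtain ⟨hcard, hcontr, hC1, hcf, ⟨H, α, hH, hα, hhol⟩, _⟩ := hΦ
  have hne : Nonempty A := Fintype.card_pos_iff.1 (by omega)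
  have hconf : ∀ a, IsConf (φ a) := fun a => ⟨hC1 a, hcf a⟩
  choose ρ hρ0 hρ1 hρ using hcontr
  obtain ⟨a₀, ha₀⟩ := Finite.exists_max ρ
  have hc : ∀ a x y, ‖φ a x - φ a y‖ ≤ ρ a₀ * ‖x - y‖ := fun a x y =>
    (hρ a x y).trans (by gcongr; exact ha₀ a)
  have hcase : d = 0 ∨ d = 1 ∨ d = 2 ∨ 3 ≤ d := by omega
  rcases hcase with rfl | rfl | rfl | hd
  · exact bdist_of_subsingleton φ (Set.subsingleton_of_subsingleton)
  · exact bdist_one hconf (hρ0 a₀) (hρ1 a₀) hc hH hα hhol hXc hX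
  · refine bdist_of_similar X fun a => rigid_two (hconf a) (B := ρ a₀) fun x => ?_
    have hL : LipschitzWith (⟨ρ a₀, (hρ0 a₀).le⟩ : NNReal) (φ a) :=
      LipschitzWith.of_dist_le_mul fun x y => by
        rw [dist_eq_norm, dist_eq_norm]; exact hc a x y
    exact norm_fderiv_le_of_lipschitz ℝ hL
  · exact bdist_of_similar X fun a => similarity_of_const (hconf a) (rigid_three hd (hconf a))

lemma listMap_append {d : ℕ} {A : Type*} (φ : A → Eu d → Eu d) (w u : List A) (x : Eu d) :
    listMap φ (w ++ u) x = listMap φ w (listMap φ u x) := by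
  induction w with
  | nil => rfl
  | cons a w ih =>
    exact congrArg (φ a) ih

lemma setDist_le {d : ℕ} {S T : Set (Eu d)} {p q : Eu d} (hp : p ∈ S) (hq : q ∈ T) :
    setDist S T ≤ dist p q := by
  refine csInf_le ⟨0, ?_⟩ (Set.mem_image2_of_mem hp hq)
  rintro _ ⟨s, _, t, _, rfl⟩
  exact dist_nonneg

lemma le_setDist {d : ℕ} {S T : Set (Eu d)} {c : ℝ} (hS : S.Nonempty) (hT : T.Nonempty)
    (h : ∀ p ∈ S, ∀ q ∈ T, c ≤ dist p q) : c ≤ setDist S T := by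
  refine le_csInf (hS.image2 hT) ?_
  rintro _ ⟨s, hs, t, ht, rfl⟩
  exact h s hs t ht

/-- Separation lemma: distance between images of incomparable words is comparable to
the diameter of the image of their maximal common prefix. -/
theorem separation_lemma
    (d : ℕ) {A : Type*} [Fintype A]
    (φ : A → EuclideanSpace ℝ (Fin d) → EuclideanSpace ℝ (Fin d))
    (hΦ : IsSelfConformalIFS φ)
    (X : Set (EuclideanSpace ℝ (Fin d))) (hXne : X.Nonempty) (hXc : IsCompact X)
    (hXinv : X = ⋃ a, φ a '' X)
    (Ab : A → Set A) (c₁ : ℝ) (hc₁ : 0 < c₁)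
    (hsep : ∀ b : A, ∀ a ∈ Ab b, ∀ a' ∈ Ab b, a ≠ a' →
      c₁ ≤ setDist (φ a '' X) (φ a' '' X)) :
    ∃ c : ℝ, 0 < c ∧ c ≤ 1 ∧
      ∀ (b : ℕ → A) (l l' : List A),
        (∀ j : Fin l.length, l.get j ∈ Ab (b (j : ℕ))) →
        (∀ j : Fin l'.length, l'.get j ∈ Ab (b (j : ℕ))) →
        ¬ l <+: l' → ¬ l' <+: l →
        ∀ w : List A, w <+: l → w <+: l' →
          (∀ w' : List A, w' <+: l → w' <+: l' → w'.length ≤ w.length) →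
          c * Metric.diam (listMap φ w '' X) ≤
              setDist (listMap φ l '' X) (listMap φ l' '' X) ∧
            setDist (listMap φ l '' X) (listMap φ l' '' X) ≤
              Metric.diam (listMap φ w '' X) := by
  have hX : ∀ a, ∀ x ∈ X, φ a x ∈ X := by
    intro a x hx
    rw [hXinv]
    exact Set.mem_iUnion.2 ⟨a, x, hx, rfl⟩
  obtain ⟨K, hK, hBD⟩ := bdist_main hΦ hXc hX
  have hK0 : 0 < K := by linarith
  have hD0 : 0 ≤ Metric.diam X := Metric.diam_nonneg
  set c := min 1 (c₁ / (K * (Metric.diam X + 1))) with hc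
  have hc0 : 0 < c := lt_min one_pos (by positivity)
  refine ⟨c, hc0, min_le_left _ _, ?_⟩
  intro b l l' hl hl' hn hn' w hw hw' hmax
  obtain ⟨t, rfl⟩ := hw
  obtain ⟨t', rfl⟩ := hw'
  rcases t with _ | ⟨a, u⟩
  · exact absurd (by simp) hn
  rcases t' with _ | ⟨a', u'⟩
  · exact absurd (by simp) hn'
  have hne : a ≠ a' := by
    rintro rfl
    have := hmax (w ++ [a]) ⟨u, by simp⟩ ⟨u', by simp⟩
    simp at this
  have ha : a ∈ Ab (b w.length) := by
    have := hl ⟨w.length, by simp⟩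
    simpa using this
  have ha' : a' ∈ Ab (b w.length) := by
    have := hl' ⟨w.length, by simp⟩
    simpa using this
  obtain ⟨s, hs, hBDw⟩ := hBD w
  have hS := hsep _ a ha a' ha' hne
  have hbdd : Bornology.IsBounded (listMap φ w '' X) :=
    hXc.isBounded.subset (by
      rintro _ ⟨x, hx, rfl⟩
      exact listMap_mem hX w x hx)
  have hmem : ∀ (a : A) (u : List A), ∀ x ∈ X, listMap φ (a :: u) x ∈ φ a '' X := fun a u x hx =>
    ⟨_, listMap_mem hX u x hx, rfl⟩
  constructor
  · have hdiam : Metric.diam (listMap φ w '' X) ≤ K * s * Metric.diam X := by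
      refine Metric.diam_le_of_forall_dist_le (by positivity) ?_
      rintro _ ⟨x, hx, rfl⟩ _ ⟨y, hy, rfl⟩
      rw [dist_eq_norm]
      refine (hBDw x hx y hy).2.trans ?_
      gcongr
      rw [← dist_eq_norm]
      exact Metric.dist_le_diam_of_mem hXc.isBounded hx hy
    have h1 : c * Metric.diam (listMap φ w '' X) ≤ s * c₁ := by
      calc c * Metric.diam (listMap φ w '' X)
          ≤ c₁ / (K * (Metric.diam X + 1)) * (K * s * (Metric.diam X + 1)) := by
            refine mul_le_mul (min_le_right _ _) (hdiam.trans ?_) Metric.diam_nonneg (by positivity)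
            gcongr; linarith
        _ = s * c₁ := by field_simp
    refine h1.trans (le_setDist (hXne.image _) (hXne.image _) ?_)
    rintro _ ⟨x, hx, rfl⟩ _ ⟨y, hy, rfl⟩
    rw [listMap_append, listMap_append, dist_eq_norm]
    refine le_trans ?_ (hBDw _ (listMap_mem hX _ x hx) _ (listMap_mem hX _ y hy)).1
    gcongr
    rw [← dist_eq_norm]
    exact hS.trans (setDist_le (hmem a u x hx) (hmem a' u' y hy))
  · obtain ⟨x, hx⟩ := hXne
    refine (setDist_le (Set.mem_image_of_mem _ hx) (Set.mem_image_of_mem _ hx)).trans ?_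
    refine Metric.dist_le_diam_of_mem hbdd ?_ ?_
    · rw [listMap_append]; exact ⟨_, listMap_mem hX _ x hx, rfl⟩
    · rw [listMap_append]; exact ⟨_, listMap_mem hX _ x hx, rfl⟩
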